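/- arXiv:1804.06770 — 6 statements merged into one kernel-verified Lean document; each statement's English description precedes it below -/
import Mathlib

section
/- Fix positive integers n and ℓ with 2 ≤ ℓ ≤ n, and define F : {1, 2, …, n−ℓ+1} → ℕ by F(w) = w·∑_{i=0}^{ℓ−1} C(n−w, i). Then F attains its maximum over {1, …, n−ℓ+1} at w = ⌊(n+1)/ℓ⌋ or at w = ⌈n/ℓ⌉; that is, there exists w* ∈ {⌊(n+1)/ℓ⌋, ⌈n/ℓ⌉} with F(w*) ≥ F(w) for all w ∈ {1, …, n−ℓ+1}. -/
/-!
Write `k = ℓ - 1` and `S(m) = ∑_{i ≤ k} C(m, i)`. Pascal's rule gives `S(m+1) + C(m, k) = 2 S(m)`,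
so with `m = n - w - 1` the inequality `F(w) ≤ F(w+1)` is equivalent to
`(w - 1) S(m) ≤ w C(m, k)`.

* If `w + 1 ≤ ⌊(n+1)/ℓ⌋`, then `C(m, j) ≤ C(m, j+1) / w` for all `j < k`, and comparing `S(m)` with
  a geometric series of ratio `1/w` gives `F(w) ≤ F(w+1)` (`mul_sum_choose_le`).
* If `w ≥ ⌈n/ℓ⌉`, then `C(m, k) ≤ (w - 1) C(m, k-1)`, and the last two terms of `S(m)` alone give
  `F(w+1) ≤ F(w)` (`le_mul_sum_choose`).

So `F` increases up to `⌊(n+1)/ℓ⌋` and decreases from `⌈n/ℓ⌉` on. As these two numbers differ by at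
most one, the larger of the two values of `F` is the maximum.
-/

/-- `F n ℓ w = w·∑_{i=0}^{ℓ−1} C(n−w, i)`. -/
def F (n ℓ w : ℕ) : ℕ := w * ∑ i ∈ Finset.range ℓ, (n - w).choose i

lemma sum_choose_succ_add (m k : ℕ) :
    ∑ i ∈ Finset.range (k + 1), (m + 1).choose i + m.choose k
      = 2 * ∑ i ∈ Finset.range (k + 1), m.choose i := by
  induction k with
  | zero => simp
  | succ k ih =>
    rw [Finset.sum_range_succ, Finset.sum_range_succ (fun i => m.choose i), Nat.choose_succ_succ']
    omega

/-- Comparison with the geometric series of ratio `1 / (u + 1)`. -/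
lemma mul_sum_choose_le (m u k : ℕ) (h : (u + 2) * k ≤ m + 1) :
    u * ∑ i ∈ Finset.range (k + 1), m.choose i ≤ (u + 1) * m.choose k := by
  induction k with
  | zero => simp
  | succ k ih =>
    have ih' := ih (by nlinarith)
    have hratio : (u + 1) * m.choose k ≤ m.choose (k + 1) := by
      have h1 := Nat.choose_succ_right_eq m k
      have h2 : (u + 1) * (k + 1) ≤ m - k := by
        apply Nat.le_sub_of_add_le
        nlinarith
      have h3 := Nat.mul_le_mul_left (m.choose k) h2
      refine Nat.le_of_mul_le_mul_right (c := k + 1) ?_ (Nat.succ_pos k)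
      rw [h1]
      linarith
    rw [Finset.sum_range_succ, mul_add]
    linarith

/-- The last two terms of the sum already suffice. -/
lemma le_mul_sum_choose (m u k : ℕ) (h : m + 1 ≤ (u + 1) * (k + 1)) :
    (u + 1) * m.choose (k + 1) ≤ u * ∑ i ∈ Finset.range (k + 2), m.choose i := by
  have hratio : m.choose (k + 1) ≤ u * m.choose k := by
    have h1 := Nat.choose_succ_right_eq m k
    have h2 : m - k ≤ u * (k + 1) := by
      apply Nat.sub_le_of_le_add
      nlinarith
    have h3 := Nat.mul_le_mul_left (m.choose k) h2
    refine Nat.le_of_mul_le_mul_right (c := k + 1) ?_ (Nat.succ_pos k)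
    rw [h1]
    linarith
  rw [Finset.sum_range_succ, Finset.sum_range_succ, mul_add, mul_add]
  have := Nat.zero_le (u * ∑ i ∈ Finset.range k, m.choose i)
  linarith

lemma F_le_succ (n ℓ w : ℕ) (hℓ : 2 ≤ ℓ) (hw : 1 ≤ w) (h : (w + 1) * ℓ ≤ n + 1) :
    F n ℓ w ≤ F n ℓ (w + 1) := by
  obtain ⟨k, rfl⟩ : ∃ k, ℓ = k + 1 := ⟨ℓ - 1, by omega⟩
  obtain ⟨u, rfl⟩ : ∃ u, w = u + 1 := ⟨w - 1, by omega⟩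
  obtain ⟨m, rfl⟩ : ∃ m, n = m + u + 2 := ⟨n - u - 2, by
    have : u + 2 ≤ n := by nlinarith
    omega⟩
  have hA := mul_sum_choose_le m u k (by linarith)
  have hS := sum_choose_succ_add m k
  unfold F
  rw [show m + u + 2 - (u + 1) = m + 1 by omega, show m + u + 2 - (u + 1 + 1) = m by omega]
  nlinarith

lemma F_succ_le (n ℓ w : ℕ) (hℓ : 2 ≤ ℓ) (hw : 1 ≤ w) (hwn : w + 1 ≤ n) (h : n ≤ w * ℓ) :
    F n ℓ (w + 1) ≤ F n ℓ w := by
  obtain ⟨k, rfl⟩ : ∃ k, ℓ = k + 2 := ⟨ℓ - 2, by omega⟩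
  obtain ⟨u, rfl⟩ : ∃ u, w = u + 1 := ⟨w - 1, by omega⟩
  obtain ⟨m, rfl⟩ : ∃ m, n = m + u + 2 := ⟨n - u - 2, by omega⟩
  have hB := le_mul_sum_choose m u k (by linarith)
  have hS := sum_choose_succ_add m (k + 1)
  unfold F
  rw [show m + u + 2 - (u + 1) = m + 1 by omega, show m + u + 2 - (u + 1 + 1) = m by omega]
  nlinarith

/-- For `2 ≤ ℓ ≤ n`, the function `F(w) = w·∑_{i=0}^{ℓ−1} C(n−w, i)` attains its maximum over
`{1, …, n−ℓ+1}` at `w = ⌊(n+1)/ℓ⌋` or at `w = ⌈n/ℓ⌉`. -/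
theorem stmt2 (n ℓ : ℕ) (hℓ2 : 2 ≤ ℓ) (hℓn : ℓ ≤ n) :
    ∃ w ∈ ({(n + 1) / ℓ, (n + ℓ - 1) / ℓ} : Finset ℕ),
      ∀ v ∈ Finset.Icc 1 (n - ℓ + 1), F n ℓ v ≤ F n ℓ w := by
  have hpos : 0 < ℓ := by omega
  have ha : (n + 1) / ℓ * ℓ ≤ n + 1 := Nat.div_mul_le_self _ _
  have hb : n ≤ (n + ℓ - 1) / ℓ * ℓ := by
    have := Nat.lt_div_mul_add (a := n + ℓ - 1) hpos
    omega
  have hb1 : 1 ≤ (n + ℓ - 1) / ℓ := (Nat.one_le_div_iff hpos).2 (by omega)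
  have hba : (n + ℓ - 1) / ℓ ≤ (n + 1) / ℓ + 1 := by
    rw [← Nat.add_div_right _ hpos]
    exact Nat.div_le_div_right (by omega)
  set a := (n + 1) / ℓ
  set b := (n + ℓ - 1) / ℓ
  have hup : ∀ v, 1 ≤ v → v ≤ a → F n ℓ v ≤ F n ℓ a := by
    intro v hv hva
    refine Nat.decreasingInduction' (P := fun v => F n ℓ v ≤ F n ℓ a) ?_ hva le_rfl
    intro j hj hvj ih
    exact (F_le_succ n ℓ j hℓ2 (by omega)
      ((Nat.mul_le_mul_right ℓ (Nat.succ_le_of_lt hj)).trans ha)).trans ih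
  have hdown : ∀ v, b ≤ v → v ≤ n → F n ℓ v ≤ F n ℓ b := by
    intro v hv
    induction v, hv using Nat.le_induction with
    | base => exact fun _ => le_rfl
    | succ v hbv ih =>
      intro hvn
      exact (F_succ_le n ℓ v hℓ2 (by omega) hvn
        (hb.trans (Nat.mul_le_mul_right ℓ hbv))).trans (ih (by omega))
  have key : ∀ v ∈ Finset.Icc 1 (n - ℓ + 1), F n ℓ v ≤ F n ℓ a ∨ F n ℓ v ≤ F n ℓ b := by
    intro v hv
    rw [Finset.mem_Icc] at hv
    rcases le_or_gt v a with h | h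
    · exact Or.inl (hup v hv.1 h)
    · exact Or.inr (hdown v (by omega) (by omega))
  rcases le_total (F n ℓ a) (F n ℓ b) with h | h
  · exact ⟨b, by simp, fun v hv => (key v hv).elim (fun h' => h'.trans h) id⟩
  · exact ⟨a, by simp, fun v hv => (key v hv).elim id (fun h' => h'.trans h)⟩
end

section
/- Fix positive integers n and ℓ with 2 ≤ ℓ ≤ n, and define F(w) = w·∑_{i=0}^{ℓ−1} C(n−w, i). Then for every integer w with 1 ≤ w and w·ℓ ≤ n − ℓ + 1, one has F(w) < F(w+1). -/
lemma mul_choose_le_choose_succ {m w j : ℕ} (h : (w + 1) * (j + 1) ≤ m + 1) :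
    w * m.choose j ≤ m.choose (j + 1) := by
  have h2 : w * (j + 1) ≤ m - j := by
    have : (w + 1) * (j + 1) = w * (j + 1) + j + 1 := by ring
    omega
  refine Nat.le_of_mul_le_mul_right ?_ (Nat.succ_pos j)
  calc w * m.choose j * (j + 1) = m.choose j * (w * (j + 1)) := by ring
    _ ≤ m.choose j * (m - j) := Nat.mul_le_mul_left _ h2
    _ = m.choose (j + 1) * (j + 1) := (Nat.choose_succ_right_eq m j).symm

/-- The telescoped estimate, with `v = w - 1`. -/
lemma mul_sum_choose_lt {m v : ℕ} (k : ℕ) (h : (v + 2) * k ≤ m + 1) :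
    v * ∑ i ∈ Finset.range k, m.choose i < m.choose k := by
  induction k with
  | zero => simp
  | succ j ih =>
    have ih' := ih (le_trans (Nat.mul_le_mul_left _ (Nat.le_succ j)) h)
    have hstep := mul_choose_le_choose_succ (w := v + 1) h
    rw [Finset.sum_range_succ]
    linarith

/-- Pascal's rule summed over an initial segment of a row. -/
lemma sum_choose_succ (m k : ℕ) :
    ∑ i ∈ Finset.range (k + 1), (m + 1).choose i =
      ∑ i ∈ Finset.range (k + 1), m.choose i + ∑ i ∈ Finset.range k, m.choose i := by
  rw [Finset.sum_range_succ', Finset.sum_range_succ' (fun i => m.choose i)]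
  simp only [Nat.choose_succ_succ', Finset.sum_add_distrib, Nat.choose_zero_right]
  ring

/-- For `2 ≤ ℓ ≤ n` and every integer `w` with `1 ≤ w` and `w·ℓ ≤ n − ℓ + 1`,
one has `F(w) < F(w+1)`. -/
theorem stmt3 (n ℓ w : ℕ) (hℓ2 : 2 ≤ ℓ) (hℓn : ℓ ≤ n) (hw : 1 ≤ w)
    (hwl : w * ℓ ≤ n - ℓ + 1) :
    F n ℓ w < F n ℓ (w + 1) := by
  obtain ⟨k, rfl⟩ : ∃ k, ℓ = k + 1 := ⟨ℓ - 1, by omega⟩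
  obtain ⟨v, rfl⟩ : ∃ v, w = v + 1 := ⟨w - 1, by omega⟩
  have h1 : (v + 1) * (k + 1) + k ≤ n := by omega
  -- `k ≥ 1`, so `n ≥ w + 1` and the subtractions `n - w`, `n - (w + 1)` do not truncate
  obtain ⟨m, rfl⟩ : ∃ m, n = m + (v + 2) := ⟨n - (v + 2), by
    have : v + 2 ≤ n := by nlinarith
    omega⟩
  have key := mul_sum_choose_lt (m := m) (v := v) k (by linarith)
  have e1 : m + (v + 2) - (v + 1) = m + 1 := by omega
  have e2 : m + (v + 2) - (v + 1 + 1) = m := by omega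
  unfold F
  rw [e1, e2, sum_choose_succ, Finset.sum_range_succ]
  linarith
end

section
/- For integers m ≥ i ≥ 0, the number of m×i matrices over F_2 of rank i having no row of Hamming weight one equals ∑_{k=0}^{i} C(i,k) ∑_{p=0}^{m} (−1)^{m−p} C(m,p) · 2^{kp} · Surj(m−p, k) · ∏_{t=0}^{i−k−1} (2^p − 2^t), where the identity is read in ℤ, C(a,b) denotes the binomial coefficient, and Surj(a,b) denotes the number of surjective functions from a set of a elements onto a set of b elements (so Surj(a,b) = b!·S(a,b), with S(a,b) the Stirling number of the second kind). -/
/-!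
Full rank means that the columns are linearly independent. Inclusion–exclusion over the set `S` of
rows required to have weight one (`inclusion_exclusion`) reduces the count to matrices with
independent columns in which every row of `S` is a unit vector. Such a matrix (`glue`) is a function
`f : S → columns` together with arbitrary rows outside `S`. The unit rows force any column relation
to vanish on the image `T` of `f`, so the columns are independent exactly when those outside `T`,
restricted to the `p = m - #S` remaining rows, are independent (`glue_linearIndependent`). With
`k = #T` this leaves `2 ^ (k * p)` choices for the columns in `T` and `∏ (2 ^ p - 2 ^ t)` for the
others, while `Surj(m - p, k)` functions `f` have image `T` (`card_image_eq`). Summing over `T` and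
`S` by cardinality gives the binomial coefficients.
-/

/-- `surjCount a b` is the number of surjective functions from a set of `a` elements onto a set
of `b` elements (so `surjCount a b = b!·S(a,b)` with `S` the Stirling number of the second kind). -/
noncomputable def surjCount (a b : ℕ) : ℕ := Nat.card {f : Fin a → Fin b // Function.Surjective f}

open Finset

/-- The number of ordered linearly independent families, in integer form: the product vanishes
when the family is longer than the dimension. -/
lemma card_linearIndependent_family (P J : Type) [Fintype P] [Fintype J] :
    (Nat.card {g : J → P → ZMod 2 // LinearIndependent (ZMod 2) g} : ℤ) =
      ∏ t ∈ range (Fintype.card J), ((2 : ℤ) ^ Fintype.card P - 2 ^ t) := by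
  by_cases h : Fintype.card J ≤ Fintype.card P
  · have e : {g : J → P → ZMod 2 // LinearIndependent (ZMod 2) g} ≃
        {s : Fin (Fintype.card J) → P → ZMod 2 // LinearIndependent (ZMod 2) s} :=
      (Equiv.arrowCongr (Fintype.equivFin J) (Equiv.refl _)).subtypeEquiv fun g => by
        simpa [Equiv.arrowCongr, Function.comp_def] using
          (linearIndependent_equiv (R := ZMod 2) (Fintype.equivFin J).symm (f := g)).symm
    have hk : Fintype.card J ≤ Module.finrank (ZMod 2) (P → ZMod 2) := by simpa using h
    rw [Nat.card_congr e, card_linearIndependent hk, Finset.prod_range, Nat.cast_prod]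
    refine Finset.prod_congr rfl fun t _ => ?_
    have ht : 2 ^ (t : ℕ) ≤ 2 ^ Fintype.card P :=
      Nat.pow_le_pow_right (by norm_num) (t.2.le.trans h)
    simp [Nat.cast_sub ht]
  · have : IsEmpty {g : J → P → ZMod 2 // LinearIndependent (ZMod 2) g} :=
      ⟨fun g => h (by simpa using g.2.fintype_card_le_finrank)⟩
    rw [Nat.card_of_isEmpty, Finset.prod_eq_zero (i := Fintype.card P)]
    · simp
    · simpa using h
    · simp

/-- Columns in `T` are free, and the columns outside `T` form a linearly independent family. -/
lemma card_partial_linearIndependent (P C : Type) [Fintype P] [Fintype C] [DecidableEq C]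
    (T : Finset C) :
    (Nat.card {B : C → P → ZMod 2 //
        LinearIndependent (ZMod 2) fun j : {j // j ∉ T} => B j} : ℤ) =
      2 ^ (#T * Fintype.card P) *
        ∏ t ∈ range (Fintype.card C - #T), ((2 : ℤ) ^ Fintype.card P - 2 ^ t) := by
  have e : {B : C → P → ZMod 2 // LinearIndependent (ZMod 2) fun j : {j // j ∉ T} => B j} ≃
      ({j // j ∈ T} → P → ZMod 2) ×
        {g : {j // j ∉ T} → P → ZMod 2 // LinearIndependent (ZMod 2) g} :=
    ((Equiv.piEquivPiSubtypeProd (· ∈ T) fun _ => P → ZMod 2).subtypeEquiv fun B => by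
      rfl : _ ≃ {x : ({j // j ∈ T} → P → ZMod 2) × ({j // j ∉ T} → P → ZMod 2) //
        LinearIndependent (ZMod 2) x.2}).trans
    { toFun := fun x => (x.1.1, ⟨x.1.2, x.2⟩)
      invFun := fun x => ⟨(x.1, x.2.1), x.2.2⟩
      left_inv := fun _ => rfl
      right_inv := fun _ => rfl }
  rw [Nat.card_congr e, Nat.card_prod, Nat.cast_mul, card_linearIndependent_family]
  rw [Fintype.card_subtype_compl, Fintype.card_coe]
  congr 1
  rw [Nat.card_fun, Nat.card_fun, Nat.card_zmod, Nat.card_eq_fintype_card,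
    Nat.card_eq_fintype_card, Fintype.card_coe, ← pow_mul, mul_comm]
  push_cast
  rfl

lemma weight_one_iff {C : Type} [Fintype C] [DecidableEq C] (r : C → ZMod 2) :
    #{c | r c ≠ 0} = 1 ↔ ∃ c, r = Pi.single c 1 := by
  have key : ∀ x : ZMod 2, x ≠ 0 → x = 1 := by decide
  constructor
  · intro h
    obtain ⟨c, hc⟩ := Finset.card_eq_one.1 h
    refine ⟨c, funext fun j => ?_⟩
    have hj := Finset.ext_iff.1 hc j
    simp only [mem_filter, mem_univ, true_and, mem_singleton] at hj
    by_cases hjc : j = c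
    · subst hjc; simpa using key _ (hj.2 rfl)
    · simpa [hjc] using hj
  · rintro ⟨c, rfl⟩
    rw [Finset.card_eq_one]
    exact ⟨c, by ext j; simp [Pi.single_apply]⟩

/-- The matrix whose rows in `S` are the unit vectors `e_{f a}` and whose remaining rows are read
off from the column family `B`. -/
def glue {R C : Type} [DecidableEq R] [DecidableEq C] (S : Finset R) (f : {a // a ∈ S} → C)
    (B : C → {a // a ∉ S} → ZMod 2) : Matrix R C (ZMod 2) :=
  fun a j => if h : a ∈ S then (Pi.single (f ⟨a, h⟩) 1 : C → ZMod 2) j else B j ⟨a, h⟩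

/-- The unit rows force the coefficients of a column relation to vanish on the image of `f`,
so only the columns outside that image matter. -/
lemma glue_linearIndependent {R C : Type} [Fintype R] [Fintype C] [DecidableEq R] [DecidableEq C]
    (S : Finset R) (f : {a // a ∈ S} → C) (B : C → {a // a ∉ S} → ZMod 2) :
    LinearIndependent (ZMod 2) (glue S f B).col ↔
      LinearIndependent (ZMod 2) fun j : {j // j ∉ univ.image f} => B j := by
  -- A relation between the columns, split into rows in `S` and rows outside `S`.
  have rel : ∀ g : C → ZMod 2, ∑ j, g j • (glue S f B).col j = 0 ↔
      (∀ a, g (f a) = 0) ∧ ∑ j, g j • B j = 0 := by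
    intro g
    constructor
    · intro h
      refine ⟨fun a => ?_, funext fun a => ?_⟩
      · have := congrFun h a.1
        simpa [glue, Matrix.col, Pi.single_apply] using this
      · have := congrFun h a.1
        simpa [glue, Matrix.col, a.2] using this
    · rintro ⟨h1, h2⟩
      funext a
      by_cases ha : a ∈ S
      · simpa [glue, Matrix.col, ha, Pi.single_apply] using h1 ⟨a, ha⟩
      · simpa [glue, Matrix.col, ha] using congrFun h2 ⟨a, ha⟩
  -- For coefficients vanishing on the image, the sum only sees the complement.
  have restr : ∀ g : C → ZMod 2, (∀ a, g (f a) = 0) →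
      ∑ j, g j • B j = ∑ j : {j // j ∉ univ.image f}, g j • B j := by
    intro g hg
    rw [← Fintype.sum_subtype_add_sum_subtype (fun j => j ∈ univ.image f), add_eq_right]
    refine Finset.sum_eq_zero fun j _ => ?_
    obtain ⟨a, -, ha⟩ := Finset.mem_image.1 j.2
    rw [← ha, hg, zero_smul]
  rw [Fintype.linearIndependent_iff, Fintype.linearIndependent_iff]
  constructor
  · intro h g hg j
    let g' : C → ZMod 2 := fun j => if hj : j ∉ univ.image f then g ⟨j, hj⟩ else 0
    have h0 : ∀ a, g' (f a) = 0 := fun a => by simp [g']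
    have hs : ∀ j : {j // j ∉ univ.image f}, g' j = g j := fun j => dif_pos j.2
    rw [← hs]
    refine h g' ((rel g').2 ⟨h0, ?_⟩) j
    rw [restr g' h0, ← hg]
    exact Finset.sum_congr rfl fun j _ => by rw [hs]
  · intro h g hg j
    obtain ⟨h1, h2⟩ := (rel g).1 hg
    rw [restr g h1] at h2
    by_cases hj : j ∈ univ.image f
    · obtain ⟨a, -, rfl⟩ := Finset.mem_image.1 hj
      exact h1 a
    · exact h (fun j => g j) h2 ⟨j, hj⟩

/-- The functions with a prescribed image `T` are the surjections onto `T`. -/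
lemma card_image_eq {A C : Type} [Fintype A] [Fintype C] [DecidableEq A] [DecidableEq C]
    (T : Finset C) :
    #{f : A → C | univ.image f = T} = surjCount (Fintype.card A) #T := by
  rw [surjCount, ← Fintype.card_subtype, ← Nat.card_eq_fintype_card]
  have eA := Fintype.equivFin A
  have eT := T.equivFin
  symm
  refine Nat.card_eq_of_bijective
    (fun g : {g : Fin (Fintype.card A) → Fin #T // Function.Surjective g} =>
      (⟨fun a => (eT.symm (g.1 (eA a)) : C), ?_⟩ : {f : A → C // univ.image f = T})) ⟨?_, ?_⟩
  · ext c
    simp only [mem_image, mem_univ, true_and]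
    constructor
    · rintro ⟨a, rfl⟩; exact (eT.symm _).2
    · intro hc
      obtain ⟨x, hx⟩ := g.2 (eT ⟨c, hc⟩)
      exact ⟨eA.symm x, by simp [hx]⟩
  · intro g g' h
    apply Subtype.ext
    funext x
    have := congrFun (congrArg Subtype.val h) (eA.symm x)
    simpa [Subtype.val_inj] using this
  · rintro ⟨f, hf⟩
    have hm : ∀ a, f a ∈ T := fun a => hf ▸ mem_image_of_mem f (mem_univ a)
    refine ⟨⟨fun x => eT ⟨f (eA.symm x), hm _⟩, fun y => ?_⟩, ?_⟩
    · have : ((eT.symm y : T) : C) ∈ univ.image f := hf ▸ (eT.symm y).2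
      obtain ⟨a, -, ha⟩ := mem_image.1 this
      exact ⟨eA a, by simp [ha]⟩
    · apply Subtype.ext
      funext a
      simp

/-- The inclusion–exclusion term of `S`: matrices with independent columns whose rows in `S` all
have weight one. -/
lemma card_unit_rows {R C : Type} [Fintype R] [Fintype C] [DecidableEq R] [DecidableEq C]
    (S : Finset R) :
    (Nat.card {A : Matrix R C (ZMod 2) //
        LinearIndependent (ZMod 2) A.col ∧ ∀ a ∈ S, #{c | A a c ≠ 0} = 1} : ℤ) =
      ∑ k ∈ range (Fintype.card C + 1), ((Fintype.card C).choose k : ℤ) *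
        (surjCount #S k * (2 ^ (k * (Fintype.card R - #S)) *
          ∏ t ∈ range (Fintype.card C - k),
            ((2 : ℤ) ^ (Fintype.card R - #S) - 2 ^ t))) := by
  have e : Nat.card {A : Matrix R C (ZMod 2) //
        LinearIndependent (ZMod 2) A.col ∧ ∀ a ∈ S, #{c | A a c ≠ 0} = 1} =
      Nat.card (Σ f : {a // a ∈ S} → C, {B : C → {a // a ∉ S} → ZMod 2 //
        LinearIndependent (ZMod 2) fun j : {j // j ∉ univ.image f} => B j}) := by
    symm
    refine Nat.card_eq_of_bijective (fun x => ⟨glue S x.1 x.2.1,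
      (glue_linearIndependent S x.1 x.2.1).2 x.2.2, fun a ha => ?_⟩) ⟨?_, ?_⟩
    · exact (weight_one_iff _).2 ⟨x.1 ⟨a, ha⟩, funext fun j => by simp [glue, ha]⟩
    · rintro ⟨f, B, hB⟩ ⟨f', B', hB'⟩ h
      have h := congrArg Subtype.val h
      simp only at h
      have hf : f = f' := by
        funext a
        have := congrFun (congrFun h a.1) (f a)
        by_contra hne
        simp [glue, hne] at this
      subst hf
      have hBB : B = B' := by
        funext j a
        have := congrFun (congrFun h a.1) j
        simpa [glue, a.2] using this
      subst hBB
      rfl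
    · rintro ⟨A, hA, hS⟩
      choose f hf using fun a : {a // a ∈ S} => (weight_one_iff _).1 (hS a.1 a.2)
      have hg : glue S f (fun j a => A a.1 j) = A := by
        funext a j
        by_cases ha : a ∈ S
        · simp [glue, ha, ← hf ⟨a, ha⟩]
        · simp [glue, ha]
      have hind : LinearIndependent (ZMod 2) (glue S f fun j a => A a.1 j).col := by rwa [hg]
      refine ⟨⟨f, fun j a => A a.1 j, (glue_linearIndependent S f _).1 hind⟩, ?_⟩
      exact Subtype.ext hg
  have hcomp : Fintype.card {a // a ∉ S} = Fintype.card R - #S := by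
    rw [Fintype.card_subtype_compl, Fintype.card_coe]
  rw [e, Nat.card_sigma, Nat.cast_sum]
  simp only [card_partial_linearIndependent, hcomp]
  rw [← Finset.sum_fiberwise_of_maps_to (g := fun f : {a // a ∈ S} → C => univ.image f)
    (t := (univ : Finset C).powerset) (by simp)]
  have step : ∀ T ∈ (univ : Finset C).powerset,
      ∑ f : {a // a ∈ S} → C with univ.image f = T,
        ((2 : ℤ) ^ (#(univ.image f) * (Fintype.card R - #S)) *
          ∏ t ∈ range (Fintype.card C - #(univ.image f)),
            ((2 : ℤ) ^ (Fintype.card R - #S) - 2 ^ t)) =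
      (fun k => surjCount #S k * ((2 : ℤ) ^ (k * (Fintype.card R - #S)) *
          ∏ t ∈ range (Fintype.card C - k),
            ((2 : ℤ) ^ (Fintype.card R - #S) - 2 ^ t))) #T := by
    intro T _
    rw [Finset.sum_congr rfl (g := fun _ => (2 : ℤ) ^ (#T * (Fintype.card R - #S)) *
          ∏ t ∈ range (Fintype.card C - #T), ((2 : ℤ) ^ (Fintype.card R - #S) - 2 ^ t))
      (fun f hf => by rw [(mem_filter.1 hf).2])]
    rw [Finset.sum_const, card_image_eq, nsmul_eq_mul]
    simp
  rw [Finset.sum_congr rfl step, Finset.sum_powerset_apply_card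
    (fun k => surjCount #S k * ((2 : ℤ) ^ (k * (Fintype.card R - #S)) *
      ∏ t ∈ range (Fintype.card C - k), ((2 : ℤ) ^ (Fintype.card R - #S) - 2 ^ t)))]
  simp only [nsmul_eq_mul, Finset.card_univ]

lemma rank_eq_iff {m i : ℕ} (A : Matrix (Fin m) (Fin i) (ZMod 2)) :
    A.rank = i ↔ LinearIndependent (ZMod 2) A.col := by
  rw [linearIndependent_iff_card_eq_finrank_span, Matrix.rank_eq_finrank_span_cols,
    Fintype.card_fin, eq_comm, Set.finrank]

/-- Inclusion–exclusion over the set `S` of rows required to have weight one. -/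
lemma inclusion_exclusion {X R : Type} [Fintype X] [Fintype R] [DecidableEq R]
    (p : X → Prop) (q : X → R → Prop) :
    (Nat.card {x // p x ∧ ∀ a, ¬ q x a} : ℤ) =
      ∑ S : Finset R, (-1) ^ #S * (Nat.card {x // p x ∧ ∀ a ∈ S, q x a} : ℤ) := by
  classical
  have hc : ∀ r : X → Prop, (Nat.card {x // r x} : ℤ) = ∑ x, if r x then 1 else 0 := by
    intro r
    rw [Nat.card_eq_fintype_card, Fintype.card_subtype, Finset.sum_boole]
  simp only [hc, Finset.mul_sum]
  rw [Finset.sum_comm]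
  refine Finset.sum_congr rfl fun x _ => ?_
  by_cases hp : p x
  · have h := Fintype.prod_add (fun a => -(if q x a then (1 : ℤ) else 0)) (fun _ => (1 : ℤ))
    have hl : ∏ a, (-(if q x a then (1 : ℤ) else 0) + 1) = if ∀ a, ¬ q x a then 1 else 0 := by
      rw [← Fintype.prod_boole]
      refine Finset.prod_congr rfl fun a _ => ?_
      by_cases ha : q x a <;> simp [ha]
    simp only [hp, true_and]
    rw [← hl, h]
    refine Finset.sum_congr rfl fun S _ => ?_
    rw [Finset.prod_neg, Finset.prod_boole]
    simp
  · simp [hp]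

/-- For integers `m ≥ i ≥ 0`, the number of `m×i` matrices over `F₂` of rank `i` having no row
of Hamming weight one equals
`∑_{k=0}^{i} C(i,k) ∑_{p=0}^{m} (−1)^(m−p) C(m,p)·2^(kp)·Surj(m−p,k)·∏_{t=0}^{i−k−1} (2^p − 2^t)`
(as integers). -/
theorem stmt7 (m i : ℕ) (him : i ≤ m) :
    (Nat.card {A : Matrix (Fin m) (Fin i) (ZMod 2) //
        A.rank = i ∧ ∀ a : Fin m, (Finset.univ.filter fun c : Fin i => A a c ≠ 0).card ≠ 1} : ℤ) =
      ∑ k ∈ Finset.range (i + 1), (i.choose k : ℤ) *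
        ∑ p ∈ Finset.range (m + 1), (-1) ^ (m - p) * (m.choose p : ℤ) * 2 ^ (k * p) *
          (surjCount (m - p) k : ℤ) * ∏ t ∈ Finset.range (i - k), ((2 : ℤ) ^ p - 2 ^ t) := by
  simp only [rank_eq_iff]
  rw [inclusion_exclusion (fun A : Matrix (Fin m) (Fin i) (ZMod 2) =>
      LinearIndependent (ZMod 2) A.col)
    (fun A a => (Finset.univ.filter fun c : Fin i => A a c ≠ 0).card = 1)]
  simp only [card_unit_rows, Fintype.card_fin]
  rw [← Finset.powerset_univ, Finset.sum_powerset_apply_card (fun s => (-1 : ℤ) ^ s *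
    ∑ k ∈ range (i + 1), (i.choose k : ℤ) * (surjCount s k * (2 ^ (k * (m - s)) *
      ∏ t ∈ range (i - k), ((2 : ℤ) ^ (m - s) - 2 ^ t))))]
  simp only [Finset.card_univ, Fintype.card_fin, nsmul_eq_mul, Finset.mul_sum]
  rw [Finset.sum_comm]
  refine Finset.sum_congr rfl fun k _ => ?_
  -- The summation index changes from `s = #S` to `p = m - s`, the number of free rows.
  rw [← Finset.sum_range_reflect]
  refine Finset.sum_congr rfl fun p hp => ?_
  have hpm : p ≤ m := Nat.lt_succ_iff.1 (mem_range.1 hp)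
  have h1 : m + 1 - 1 - p = m - p := by omega
  have h2 : m - (m - p) = p := by omega
  rw [h1, h2, Nat.choose_symm hpm]
  ring
end

section
/- Let C be a binary linear [n,k] code with dual code C⊥ of dimension r = n − k, let ℓ be an integer with 1 ≤ ℓ ≤ r, and let H be a matrix over F_2 with n columns all of whose rows are codewords of C⊥. If every subset S ⊆ {1,…,n} with 1 ≤ |S| ≤ ℓ that is coverable by C is covered by some row of H, then the rank of H is at least ℓ. -/
/-!
The images of the unit vectors `e_j` span the quotient `F₂ⁿ / C`, which has dimension `n - k`, so
some `n - k` of them form a basis; let `I` be their index set. A coordinate functional of this basis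
pulls back to a codeword of `C⊥` that is `1` at a chosen position of `I` and `0` at the others, so
every nonempty subset of `I` is coverable (`exists_coverable_positions`).

Given `ℓ` positions in `I`, the corresponding columns of `H` are linearly independent: a nontrivial
dependency is a nonempty set `S` of these columns summing to zero, but the row of `H` covering `S`
has exactly one nonzero entry in `S`, so its entries over `S` do not sum to zero.
-/

/-- The Hamming weight of a vector over `F₂`. -/
def wt {n : ℕ} (h : Fin n → ZMod 2) : ℕ := (Finset.univ.filter fun j => h j ≠ 0).card

/-- `h` covers `S` if the support of `h` intersects `S` in exactly one position. -/
def Covers {n : ℕ} (h : Fin n → ZMod 2) (S : Finset (Fin n)) : Prop :=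
  (S.filter fun j => h j ≠ 0).card = 1

/-- The dual code `C⊥ = {h : ∀ c ∈ C, h·c = 0}` of a binary linear code `C ⊆ F₂ⁿ`. -/
def dualCode {n : ℕ} (C : Submodule (ZMod 2) (Fin n → ZMod 2)) : Set (Fin n → ZMod 2) :=
  {h | ∀ c ∈ C, ∑ j, h j * c j = 0}

/-- `S` is coverable by `C` if some codeword of `C⊥` covers `S`. -/
def Coverable {n : ℕ} (C : Submodule (ZMod 2) (Fin n → ZMod 2)) (S : Finset (Fin n)) : Prop :=
  ∃ h ∈ dualCode C, Covers h S

/-- `S` is a stopping set of the matrix `H` if no row of `H` covers `S`. -/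
def IsStoppingSet {m n : ℕ} (H : Matrix (Fin m) (Fin n) (ZMod 2)) (S : Finset (Fin n)) : Prop :=
  ∀ a : Fin m, ¬ Covers (H a) S

/-- `H` is a parity-check matrix of `C` if the row space of `H` equals `C⊥`. -/
def IsParityCheck {m n : ℕ} (C : Submodule (ZMod 2) (Fin n → ZMod 2))
    (H : Matrix (Fin m) (Fin n) (ZMod 2)) : Prop :=
  (Submodule.span (ZMod 2) (Set.range fun a : Fin m => H a) : Set (Fin n → ZMod 2)) = dualCode C

/-- There are `n - dim C` positions, each nonempty subset of which is coverable. -/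
lemma exists_coverable_positions {n : ℕ} (C : Submodule (ZMod 2) (Fin n → ZMod 2)) :
    ∃ I : Finset (Fin n), I.card = n - Module.finrank (ZMod 2) C ∧
      ∀ S ⊆ I, S.Nonempty → Coverable C S := by
  classical
  let v : Fin n → (Fin n → ZMod 2) ⧸ C := fun j => C.mkQ (Pi.single j 1)
  have hv : Submodule.span (ZMod 2) (Set.range v) = ⊤ := by
    have h1 : Set.range v = C.mkQ '' Set.range (Pi.basisFun (ZMod 2) (Fin n)) := by
      rw [← Set.range_comp]
      congr 1
      ext j
      simp [v]
    rw [h1, Submodule.span_image, Module.Basis.span_eq, Submodule.map_top, Submodule.range_mkQ]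
  obtain ⟨κ, a, ha, hspan, hli⟩ := exists_linearIndependent' (ZMod 2) v
  have : Fintype κ := Fintype.ofInjective a ha
  let B := Module.Basis.mk hli (by rw [hspan, hv])
  refine ⟨Finset.univ.image a, ?_, ?_⟩
  · have h1 := Module.finrank_eq_card_basis B
    have h2 := C.finrank_quotient_add_finrank
    rw [Module.finrank_fin_fun] at h2
    rw [Finset.card_image_of_injective _ ha, Finset.card_univ]
    omega
  · rintro S hS ⟨j, hj⟩
    obtain ⟨t, -, rfl⟩ := Finset.mem_image.1 (hS hj)
    let f : (Fin n → ZMod 2) →ₗ[ZMod 2] ZMod 2 := B.coord t ∘ₗ C.mkQ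
    have hval : ∀ s, f (Pi.single (a s) 1) = if s = t then 1 else 0 := by
      intro s
      have hB : C.mkQ (Pi.single (a s) 1) = B s := by simp [B, v]
      rw [LinearMap.comp_apply, hB, Module.Basis.coord_apply, Module.Basis.repr_self,
        Finsupp.single_apply]
    refine ⟨fun i => f (Pi.single i 1), ?_, ?_⟩
    · intro c hc
      have hfc : f c = 0 := by
        simp [f, (Submodule.Quotient.mk_eq_zero C).2 hc]
      rw [← hfc, f.pi_apply_eq_sum_univ c]
      refine Finset.sum_congr rfl fun i _ => ?_
      have hsingle : (Pi.single i 1 : Fin n → ZMod 2) = fun j => if i = j then 1 else 0 := by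
        ext j
        simp [Pi.single_apply, eq_comm]
      rw [smul_eq_mul, mul_comm, ← hsingle]
    · refine Finset.card_eq_one.2 ⟨a t, ?_⟩
      ext i
      simp only [Finset.mem_filter, Finset.mem_singleton]
      constructor
      · rintro ⟨hi, hne⟩
        obtain ⟨s, -, rfl⟩ := Finset.mem_image.1 (hS hi)
        rw [hval] at hne
        by_contra h
        exact hne (if_neg fun e : s = t => h (congrArg a e))
      · rintro rfl
        exact ⟨hj, by simp [hval]⟩

/-- if all rows of `H` are codewords of `C⊥` and every coverable subset `S` with
`1 ≤ |S| ≤ ℓ` (where `1 ≤ ℓ ≤ r = n − k`) is covered by some row of `H`, then `rank H ≥ ℓ`. -/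
theorem stmt11 (n k ℓ m : ℕ) (C : Submodule (ZMod 2) (Fin n → ZMod 2))
    (hk : Module.finrank (ZMod 2) C = k) (hℓ1 : 1 ≤ ℓ) (hℓr : ℓ ≤ n - k)
    (H : Matrix (Fin m) (Fin n) (ZMod 2))
    (hrows : ∀ a : Fin m, H a ∈ dualCode C)
    (hcov : ∀ S : Finset (Fin n), 1 ≤ S.card → S.card ≤ ℓ → Coverable C S →
      ∃ a : Fin m, Covers (H a) S) :
    ℓ ≤ H.rank := by
  classical
  obtain ⟨I, hI, hIcov⟩ := exists_coverable_positions C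
  obtain ⟨J, hJI, hJ⟩ := Finset.exists_subset_card_eq (s := I) (n := ℓ) (by omega)
  have hli : LinearIndependent (ZMod 2) (fun j : J => H.col j) := by
    rw [Fintype.linearIndependent_iff]
    intro g hg
    by_contra! hne
    obtain ⟨i₀, hi₀⟩ := hne
    -- The support of the dependency, as a set of positions.
    let S : Finset (Fin n) := (Finset.univ.filter fun j : J => g j ≠ 0).image Subtype.val
    have hSJ : S ⊆ J := by
      intro x hx
      obtain ⟨y, -, rfl⟩ := Finset.mem_image.1 hx
      exact y.2
    have hSne : S.Nonempty := ⟨i₀, Finset.mem_image_of_mem _ (by simpa using hi₀)⟩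
    obtain ⟨a, ha⟩ := hcov S hSne.card_pos (hJ ▸ Finset.card_le_card hSJ)
      (hIcov S (hSJ.trans hJI) hSne)
    obtain ⟨x, hx⟩ := Finset.card_eq_one.1 ha
    have hmem : ∀ y, (y ∈ S ∧ H a y ≠ 0) ↔ y = x := by
      intro y
      rw [← Finset.mem_singleton, ← hx, Finset.mem_filter]
    obtain ⟨hxS, hax⟩ := (hmem x).2 rfl
    obtain ⟨y, hy, rfl⟩ := Finset.mem_image.1 hxS
    have hgy : g y ≠ 0 := by simpa using hy
    have hsum := congrFun hg a
    simp only [Finset.sum_apply, Pi.smul_apply, Matrix.col_apply, smul_eq_mul,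
      Pi.zero_apply] at hsum
    rw [Finset.sum_eq_single y] at hsum
    · exact mul_ne_zero hgy hax hsum
    · intro z _ hzy
      by_contra hz
      refine hzy (Subtype.ext ((hmem z).1 ⟨?_, right_ne_zero_of_mul hz⟩))
      exact Finset.mem_image_of_mem _ (by simpa using left_ne_zero_of_mul hz)
    · simp
  rw [Matrix.rank_eq_finrank_span_cols, ← hJ, ← Fintype.card_coe J, ← finrank_span_eq_card hli]
  exact Submodule.finrank_mono (Submodule.span_mono (Set.range_comp_subset_range _ H.col))
end

section
/- Let h₁, h₂ ∈ F_2^n be distinct vectors, each of Hamming weight w, whose supports intersect in exactly δ positions, and let i be an integer with 1 ≤ i ≤ n. Then the number of subsets S ⊆ {1,…,n} with |S| = i that are covered by neither h₁ nor h₂ (i.e., S is a stopping set of the 2×n matrix with rows h₁, h₂) equals C(n,i) − 2w·C(n−w, i−1) + δ·C(n−2w+δ, i−1) + (w−δ)²·C(n−2w+δ, i−2). -/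
/-- Binomial coefficient `C(a, b)` with an integer lower index, equal to `0` for `b < 0`. -/
def intChoose (a : ℕ) (b : ℤ) : ℤ := if 0 ≤ b then (a.choose b.toNat : ℤ) else 0

open Finset

/-- Sets with prescribed trace `D` on `T` correspond to their parts outside `T`, which are
arbitrary subsets of `Tᶜ` of size `i - #D`. -/
lemma card_inter_eq {n : ℕ} (i : ℕ) (T D : Finset (Fin n)) (hD : D ⊆ T) (hi : #D ≤ i) :
    #{S : Finset (Fin n) | #S = i ∧ S ∩ T = D} = (n - #T).choose (i - #D) := by
  have hc : #(Tᶜ) = n - #T := by rw [card_compl, Fintype.card_fin]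
  rw [← hc, ← card_powersetCard]
  refine card_nbij' (fun S => S \ T) (fun U => U ∪ D) ?_ ?_ ?_ ?_
  · intro S hS
    simp only [coe_filter, mem_univ, true_and, Set.mem_ofPred_eq] at hS
    simp only [mem_coe, mem_powersetCard]
    refine ⟨fun x hx => by simp_all, ?_⟩
    have := card_sdiff_add_card_inter S T
    rw [hS.2, hS.1] at this
    omega
  · intro U hU
    rw [mem_coe, mem_powersetCard] at hU
    have hd : Disjoint U T := by
      rw [← subset_compl_iff_disjoint_right]; exact hU.1
    simp only [coe_filter, mem_univ, true_and, Set.mem_ofPred_eq]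
    refine ⟨?_, ?_⟩
    · rw [card_union_of_disjoint (hd.mono_right hD)]; omega
    · rw [union_inter_distrib_right, disjoint_iff_inter_eq_empty.1 hd, empty_union,
        inter_eq_left.2 hD]
  · intro S hS
    simp only [coe_filter, mem_univ, true_and, Set.mem_ofPred_eq] at hS
    simp only [← hS.2, sdiff_union_inter]
  · intro U hU
    rw [mem_coe, mem_powersetCard] at hU
    have hd : Disjoint U T := by
      rw [← subset_compl_iff_disjoint_right]; exact hU.1
    simp only [union_sdiff_distrib, sdiff_eq_empty_iff_subset.2 hD, union_empty]
    exact sdiff_eq_self_of_disjoint hd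

/-- The count of `card_inter_eq`, summed over a family of admissible traces of equal size `d`. -/
lemma card_inter_mem {n : ℕ} (i d : ℕ) (T : Finset (Fin n)) (F : Finset (Finset (Fin n)))
    (hF : ∀ D ∈ F, D ⊆ T ∧ #D = d) (hi : d ≤ i) :
    #{S : Finset (Fin n) | #S = i ∧ S ∩ T ∈ F} = #F * (n - #T).choose (i - d) := by
  rw [card_eq_sum_card_fiberwise (f := fun S => S ∩ T) (t := F)
    (fun S hS => by simp at hS; exact hS.2), ← smul_eq_mul, ← sum_const]
  refine sum_congr rfl fun D hD => ?_
  obtain ⟨h1, h2⟩ := hF D hD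
  subst h2
  rw [← card_inter_eq i T D h1 hi, filter_filter]
  congr 1
  ext S
  simp only [mem_filter, mem_univ, true_and]
  constructor
  · rintro ⟨⟨a, -⟩, b⟩; exact ⟨a, b⟩
  · rintro ⟨a, rfl⟩; exact ⟨⟨a, hD⟩, rfl⟩

lemma card_cover_one {n i : ℕ} (A : Finset (Fin n)) (hi : 1 ≤ i) :
    #{S : Finset (Fin n) | #S = i ∧ #(S ∩ A) = 1} = #A * (n - #A).choose (i - 1) := by
  have := card_inter_mem i 1 A (powersetCard 1 A) (fun D hD => mem_powersetCard.1 hD) hi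
  rw [card_powersetCard, Nat.choose_one_right] at this
  rw [← this]
  congr 1
  ext S
  simp [mem_powersetCard]

lemma card_pairs {α : Type*} [DecidableEq α] {X Y : Finset α} (h : Disjoint X Y) :
    #((X ×ˢ Y).image fun p => ({p.1, p.2} : Finset α)) = #X * #Y := by
  rw [card_image_of_injOn, card_product]
  rintro ⟨a, b⟩ hp ⟨c, d⟩ hq hpq
  simp only [coe_product, Set.mem_prod, mem_coe] at hp hq
  have hpq : ({a, b} : Finset α) = {c, d} := hpq
  have key : ∀ x ∈ X, x ∉ Y := fun x hx => disjoint_left.1 h hx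
  have h1 : a ∈ ({c, d} : Finset α) := by rw [← hpq]; simp
  have h2 : b ∈ ({c, d} : Finset α) := by rw [← hpq]; simp
  simp only [mem_insert, mem_singleton] at h1 h2
  grind

/-- A set meets each of `A`, `B` in exactly one point iff its trace on `A ∪ B` is either a single
common point or a pair consisting of a point of `A \ B` and a point of `B \ A`. -/
lemma cover_both_iff {α : Type*} [DecidableEq α] (A B S : Finset α) :
    (#(S ∩ A) = 1 ∧ #(S ∩ B) = 1) ↔ (S ∩ (A ∪ B) ∈ powersetCard 1 (A ∩ B) ∨
      S ∩ (A ∪ B) ∈ ((A \ B) ×ˢ (B \ A)).image fun p => ({p.1, p.2} : Finset α)) := by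
  simp only [mem_powersetCard, mem_image, mem_product, card_eq_one, Prod.exists]
  constructor
  · rintro ⟨⟨a, ha⟩, b, hb⟩
    have ha' := fun x => Finset.ext_iff.1 ha x
    have hb' := fun x => Finset.ext_iff.1 hb x
    simp only [mem_inter, mem_singleton] at ha' hb'
    by_cases hab : a = b
    · subst hab
      left
      have : S ∩ (A ∪ B) = {a} := by ext x; grind
      refine ⟨?_, a, this⟩
      rw [this]; grind
    · right
      refine ⟨a, b, ?_, ?_⟩
      · grind
      · ext x; grind
  · rintro (⟨h1, a, h⟩ | ⟨a, b, hab, h⟩)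
    · have h' := fun x => Finset.ext_iff.1 h x
      simp only [mem_inter, mem_singleton, mem_union] at h'
      rw [h] at h1
      exact ⟨⟨a, by ext x; grind⟩, a, by ext x; grind⟩
    · have h' := fun x => Finset.ext_iff.1 h x
      simp only [mem_inter, mem_singleton, mem_union, mem_insert] at h'
      exact ⟨⟨a, by ext x; grind⟩, b, by ext x; grind⟩

/-- The two summands count the two kinds of traces in `cover_both_iff`; for `i < 2` the pairs do
not fit into `S`, but the truncated `i - 2` would be `0`, hence the case distinction. -/
lemma card_cover_both {n i : ℕ} (A B : Finset (Fin n)) (hi : 1 ≤ i) :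
    #{S : Finset (Fin n) | #S = i ∧ #(S ∩ A) = 1 ∧ #(S ∩ B) = 1} =
      #(A ∩ B) * (n - #(A ∪ B)).choose (i - 1) +
      if 2 ≤ i then #(A \ B) * #(B \ A) * (n - #(A ∪ B)).choose (i - 2) else 0 := by
  set F := ((A \ B) ×ˢ (B \ A)).image fun p => ({p.1, p.2} : Finset (Fin n)) with hFdef
  have hdisj : Disjoint (A \ B) (B \ A) := disjoint_sdiff_sdiff
  have hF : ∀ D ∈ F, D ⊆ A ∪ B ∧ #D = 2 := by
    intro D hD
    simp only [hFdef, mem_image, mem_product, Prod.exists] at hD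
    obtain ⟨a, b, hab, rfl⟩ := hD
    refine ⟨by grind, card_pair ?_⟩
    rintro rfl
    exact disjoint_left.1 hdisj hab.1 hab.2
  have hP : ∀ D ∈ powersetCard 1 (A ∩ B), D ⊆ A ∪ B ∧ #D = 1 := by
    intro D hD
    rw [mem_powersetCard] at hD
    exact ⟨hD.1.trans (inter_subset_left.trans subset_union_left), hD.2⟩
  have h1 := card_inter_mem i 1 (A ∪ B) _ hP hi
  rw [card_powersetCard, Nat.choose_one_right] at h1
  have h2 : #{S : Finset (Fin n) | #S = i ∧ S ∩ (A ∪ B) ∈ F} =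
      if 2 ≤ i then #(A \ B) * #(B \ A) * (n - #(A ∪ B)).choose (i - 2) else 0 := by
    split_ifs with h
    · rw [card_inter_mem i 2 (A ∪ B) F hF h, hFdef, card_pairs hdisj]
    · rw [card_eq_zero, filter_eq_empty_iff]
      rintro S - ⟨hS, hSF⟩
      have := card_le_card (inter_subset_left (s₁ := S) (s₂ := A ∪ B))
      have := (hF _ hSF).2
      omega
  rw [← h1, ← h2, ← card_union_of_disjoint]
  · congr 1
    ext S
    simp only [mem_union, mem_filter, mem_univ, true_and, cover_both_iff, ← and_or_left, hFdef]
  · rw [disjoint_left]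
    intro S hS hS'
    have a := (hP _ (mem_filter.1 hS).2.2).2
    have b := (hF _ (mem_filter.1 hS').2.2).2
    omega

lemma covers_iff {n : ℕ} (h : Fin n → ZMod 2) (S : Finset (Fin n)) :
    Covers h S ↔ #(S ∩ (univ.filter fun j => h j ≠ 0)) = 1 := by
  have : S ∩ (univ.filter fun j => h j ≠ 0) = S.filter fun j => h j ≠ 0 := by
    ext x
    simp
  rw [Covers, this]

/-- for distinct `h₁, h₂ ∈ F₂ⁿ` of Hamming weight `w` each, with supports
intersecting in exactly `δ` positions, and `1 ≤ i ≤ n`, the number of `i`-subsets `S` covered by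
neither `h₁` nor `h₂` equals
`C(n,i) − 2w·C(n−w, i−1) + δ·C(n−2w+δ, i−1) + (w−δ)²·C(n−2w+δ, i−2)`. -/
theorem stmt13 (n w δ i : ℕ) (h₁ h₂ : Fin n → ZMod 2) (hne : h₁ ≠ h₂)
    (hw1 : wt h₁ = w) (hw2 : wt h₂ = w)
    (hδ : ((Finset.univ.filter fun j => h₁ j ≠ 0) ∩
        (Finset.univ.filter fun j => h₂ j ≠ 0)).card = δ)
    (hi1 : 1 ≤ i) (hin : i ≤ n) :
    (Nat.card {S : Finset (Fin n) // S.card = i ∧ ¬ Covers h₁ S ∧ ¬ Covers h₂ S} : ℤ) =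
      (n.choose i : ℤ) - 2 * (w : ℤ) * ((n - w).choose (i - 1) : ℤ)
        + (δ : ℤ) * ((n + δ - 2 * w).choose (i - 1) : ℤ)
        + ((w : ℤ) - (δ : ℤ)) ^ 2 * intChoose (n + δ - 2 * w) ((i : ℤ) - 2) := by
  simp only [covers_iff]
  unfold wt at hw1 hw2
  set A : Finset (Fin n) := Finset.univ.filter fun j => h₁ j ≠ 0
  set B : Finset (Fin n) := Finset.univ.filter fun j => h₂ j ≠ 0
  rw [Nat.card_eq_fintype_card, Fintype.card_subtype]
  have hA := card_cover_one (i := i) A hi1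
  have hB := card_cover_one (i := i) B hi1
  have hAB := card_cover_both (i := i) A B hi1
  have hU := card_union_add_card_inter A B
  have hAd := card_sdiff_add_card_inter A B
  have hBd := card_sdiff_add_card_inter B A
  rw [inter_comm B A] at hBd
  have hn : n - #(A ∪ B) = n + δ - 2 * w := by omega
  have htot : #{S : Finset (Fin n) | #S = i} = n.choose i := by
    have h := card_powersetCard i (univ : Finset (Fin n))
    rw [Finset.card_fin] at h
    rw [← h]
    congr 1
    ext S
    simp [mem_powersetCard]
  have hie := card_union_add_card_inter ({S : Finset (Fin n) | #S = i ∧ #(S ∩ A) = 1} : Finset _)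
    ({S : Finset (Fin n) | #S = i ∧ #(S ∩ B) = 1} : Finset _)
  rw [← filter_or, ← filter_and] at hie
  have hsplit := card_filter_add_card_filter_not (s := ({S : Finset (Fin n) | #S = i} : Finset _))
    (fun S => #(S ∩ A) = 1 ∨ #(S ∩ B) = 1)
  simp only [filter_filter, not_or, ← and_or_left, ← and_and_left] at hie hsplit
  rw [hA, hB, hAB, hn, hδ, hw1, hw2] at hie
  rw [htot] at hsplit
  -- The last term of the formula; both sides vanish when `i = 1`.
  have hlast : ((w : ℤ) - (δ : ℤ)) ^ 2 * intChoose (n + δ - 2 * w) ((i : ℤ) - 2) =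
      ((if 2 ≤ i then #(A \ B) * #(B \ A) * (n + δ - 2 * w).choose (i - 2) else 0 : ℕ) : ℤ) := by
    have e1 : (#(A \ B) : ℤ) = w - δ := by omega
    have e2 : (#(B \ A) : ℤ) = w - δ := by omega
    unfold intChoose
    by_cases h : 2 ≤ i
    · have : ((i : ℤ) - 2).toNat = i - 2 := by omega
      rw [if_pos h, if_pos (by omega), this]
      push_cast
      rw [e1, e2]; ring
    · rw [if_neg h, if_neg (by omega)]; simp
  rw [hlast]
  zify at hie hsplit ⊢
  linarith
end

section
/- Let C be a binary linear [n,k] code with minimum distance d ≥ 2 and dual code C⊥ of dimension r = n − k. Let H⁰ be a τ×n matrix whose rows are τ pairwise distinct codewords of C⊥, and for i = 1,…,d−1 let u_i be the number of subsets S ⊆ {1,…,n} with |S| = i that are stopping sets of H⁰. For each integer t with 0 ≤ t < 2^r − τ define D_t = ∑_{i=1}^{d−1} u_i ∏_{j=τ+1}^{τ+t} π(r,i,j), P_{t,0} = ⌊D_t⌋, P_{t,j} = ⌊π(r, d−1, τ+t+j)·P_{t,j−1}⌋ for j ≥ 1, and let κ_t be the smallest j ≥ 0 with P_{t,j} ≤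 0; set Δ = r − max{rank H⁰, d−1}. Then there exists a parity-check matrix of C with at most τ + min_{0 ≤ t < 2^r − τ} (t + κ_t) + Δ rows, all of its rows codewords of C⊥, that has no stopping set of size in {1,…,d−1}; in particular, the stopping redundancy satisfies ρ(C) ≤ τ + min_{0 ≤ t < 2^r − τ} (t + κ_t) + Δ. -/
/-- `piR r i j = 1 − i·2^(r−i)/(2^r − j)` as a real number. -/
noncomputable def piR (r i j : ℤ) : ℝ :=
  1 - (i : ℝ) * (2 : ℝ) ^ (r - i) / ((2 : ℝ) ^ r - (j : ℝ))

/-- The stopping redundancy `ρ(C)`: the smallest number of rows of a parity-check matrix of `C`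
having no stopping sets of size in `{1,…,d−1}`. -/
noncomputable def stoppingRedundancy (n d : ℕ) (C : Submodule (ZMod 2) (Fin n → ZMod 2)) : ℕ :=
  sInf {m : ℕ | ∃ H : Matrix (Fin m) (Fin n) (ZMod 2), IsParityCheck C H ∧
    ∀ S : Finset (Fin n), 1 ≤ S.card → S.card ≤ d - 1 → ¬ IsStoppingSet H S}

/-! ### Linear algebra of the dual code -/

open Finset

/-- The dual code as a submodule. -/
def dualSub {n : ℕ} (C : Submodule (ZMod 2) (Fin n → ZMod 2)) :
    Submodule (ZMod 2) (Fin n → ZMod 2) :=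
  LinearMap.BilinForm.orthogonal (dotProductBilin (ZMod 2) (ZMod 2)) C

theorem dot_isRefl {n : ℕ} : LinearMap.BilinForm.IsRefl
    (dotProductBilin (ZMod 2) (ZMod 2) : LinearMap.BilinForm (ZMod 2) (Fin n → ZMod 2)) := by
  intro x y h
  simpa [dotProduct_comm] using h

theorem dot_nondegenerate {n : ℕ} : LinearMap.BilinForm.Nondegenerate
    (dotProductBilin (ZMod 2) (ZMod 2) : LinearMap.BilinForm (ZMod 2) (Fin n → ZMod 2)) := by
  constructor
  · intro x h
    ext j
    simpa using h (Pi.single j 1)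
  · intro x h
    ext j
    simpa using h (Pi.single j 1)

theorem mem_dualSub {n : ℕ} {C : Submodule (ZMod 2) (Fin n → ZMod 2)} {h : Fin n → ZMod 2} :
    h ∈ dualSub C ↔ ∀ c ∈ C, ∑ j, h j * c j = 0 := by
  simp only [dualSub, LinearMap.BilinForm.mem_orthogonal_iff]
  refine forall₂_congr fun c _ => ?_
  simp [dotProduct, mul_comm]

theorem coe_dualSub {n : ℕ} (C : Submodule (ZMod 2) (Fin n → ZMod 2)) :
    (dualSub C : Set (Fin n → ZMod 2)) = dualCode C := by
  ext h
  exact mem_dualSub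

theorem dualSub_dualSub {n : ℕ} (C : Submodule (ZMod 2) (Fin n → ZMod 2)) :
    dualSub (dualSub C) = C :=
  LinearMap.BilinForm.orthogonal_orthogonal dot_nondegenerate dot_isRefl C

theorem finrank_dualSub {n : ℕ} (C : Submodule (ZMod 2) (Fin n → ZMod 2)) :
    Module.finrank (ZMod 2) (dualSub C) = n - Module.finrank (ZMod 2) C := by
  simpa using! LinearMap.BilinForm.finrank_orthogonal dot_nondegenerate C

/-- Restriction of dual codewords to the coordinates in `S`. -/
def restr {n : ℕ} (C : Submodule (ZMod 2) (Fin n → ZMod 2)) (S : Finset (Fin n)) :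
    dualSub C →ₗ[ZMod 2] (S → ZMod 2) :=
  (LinearMap.funLeft (ZMod 2) (ZMod 2) (Subtype.val : S → Fin n)).comp (dualSub C).subtype

/-- Fewer than `d` columns of a parity-check matrix are linearly independent: a linear relation
among them would be a nonzero codeword of weight less than `d`. -/
theorem restr_surjective {n d : ℕ} {C : Submodule (ZMod 2) (Fin n → ZMod 2)}
    (hd : ∀ c ∈ C, c ≠ 0 → d ≤ wt c) {S : Finset (Fin n)} (hS : S.card < d) :
    Function.Surjective (restr C S) := by
  classical
  rw [← LinearMap.range_eq_top]
  by_contra hne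
  obtain ⟨φ, φ0, hφ⟩ := (LinearMap.range (restr C S)).exists_le_ker_of_lt_top (lt_top_iff_ne_top.2 hne)
  set v : S → ZMod 2 := (dotProductEquiv (ZMod 2) S).symm φ with hv
  have hφv : ∀ x, φ x = ∑ j, v j * x j := by
    intro x
    have : φ = dotProductEquiv (ZMod 2) S v := by simp [hv]
    rw [this]; simp [dotProduct]
  let c : Fin n → ZMod 2 := fun j => if h : j ∈ S then v ⟨j, h⟩ else 0
  have hc : ∀ h : Fin n → ZMod 2, ∑ j, c j * h j = ∑ j : S, v j * h j := by
    intro h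
    rw [← Finset.sum_subset (Finset.subset_univ S), ← Finset.sum_coe_sort S]
    · refine Finset.sum_congr rfl fun j _ => by simp [c]
    · intro j _ hj
      simp [c, hj]
  have hcC : c ∈ C := by
    rw [← dualSub_dualSub C, mem_dualSub]
    intro h hh
    rw [hc]
    have := hφ (LinearMap.mem_range_self (restr C S) ⟨h, hh⟩)
    rw [LinearMap.mem_ker, hφv] at this
    exact this
  have hc0 : c ≠ 0 := by
    intro h0
    apply φ0
    ext x
    have h1 : ∀ j : S, v j = 0 := fun j => by
      have := congrFun h0 j
      simpa [c] using this
    simp [hφv, h1]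
  have h1 := hd c hcC hc0
  have h2 : wt c ≤ S.card := by
    refine Finset.card_le_card fun j hj => ?_
    by_contra hjS
    simp [c, hjS] at hj
  omega

/-- Values on fewer than `d` coordinates can be prescribed by a dual codeword. -/
theorem exists_dual_prescribed {n d : ℕ} {C : Submodule (ZMod 2) (Fin n → ZMod 2)}
    (hd : ∀ c ∈ C, c ≠ 0 → d ≤ wt c) {S : Finset (Fin n)} (hS : S.card < d)
    (p : Fin n → ZMod 2) : ∃ h ∈ dualSub C, ∀ j ∈ S, h j = p j := by
  obtain ⟨h, hh⟩ := restr_surjective hd hS (fun j => p j)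
  exact ⟨h, h.2, fun j hj => congrFun hh ⟨j, hj⟩⟩

theorem card_le_finrank_dualSub {n d : ℕ} {C : Submodule (ZMod 2) (Fin n → ZMod 2)}
    (hd : ∀ c ∈ C, c ≠ 0 → d ≤ wt c) {S : Finset (Fin n)} (hS : S.card < d) :
    S.card ≤ Module.finrank (ZMod 2) (dualSub C) := by
  have := LinearMap.finrank_le_finrank_of_surjective (restr_surjective hd hS)
  simpa using this

/-- The dual code as a finset. -/
noncomputable def dualFin {n : ℕ} (C : Submodule (ZMod 2) (Fin n → ZMod 2)) :
    Finset (Fin n → ZMod 2) := by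
  classical exact univ.filter (· ∈ dualSub C)

theorem mem_dualFin {n : ℕ} {C : Submodule (ZMod 2) (Fin n → ZMod 2)} {h : Fin n → ZMod 2} :
    h ∈ dualFin C ↔ h ∈ dualSub C := by
  simp [dualFin]

theorem card_dualFin {n : ℕ} (C : Submodule (ZMod 2) (Fin n → ZMod 2)) :
    (dualFin C).card = 2 ^ Module.finrank (ZMod 2) (dualSub C) := by
  classical
  have h := Module.card_eq_pow_finrank (K := ZMod 2) (V := dualSub C)
  rw [ZMod.card] at h
  rw [← h, Fintype.card_subtype]
  simp [dualFin]

theorem covers_iff_s15 {n : ℕ} {h : Fin n → ZMod 2} {S : Finset (Fin n)} :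
    Covers h S ↔ ∃ a ∈ S, ∀ j ∈ S, h j = if j = a then 1 else 0 := by
  have h01 : ∀ x : ZMod 2, x ≠ 0 ↔ x = 1 := by decide
  rw [Covers, Finset.card_eq_one]
  constructor
  · rintro ⟨a, ha⟩
    have h1 : a ∈ S.filter fun j => h j ≠ 0 := by simp [ha]
    refine ⟨a, (Finset.mem_filter.1 h1).1, fun j hj => ?_⟩
    split_ifs with hja
    · subst hja
      exact (h01 _).1 (Finset.mem_filter.1 h1).2
    · by_contra h2
      have : j ∈ S.filter fun j => h j ≠ 0 := by simp [hj, h2]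
      rw [ha] at this
      exact hja (by simpa using this)
  · rintro ⟨a, haS, ha⟩
    refine ⟨a, ?_⟩
    ext j
    simp only [Finset.mem_filter, Finset.mem_singleton]
    constructor
    · rintro ⟨hj, hne⟩
      by_contra hja
      exact hne (by rw [ha j hj, if_neg hja])
    · rintro rfl
      exact ⟨haS, by rw [ha j haS]; simp⟩

open Classical in
/-- A set `S` of size `i < d` is covered by exactly `i · 2 ^ (r - i)` dual codewords: restriction to
`S` is surjective, so each of the `i` unit vectors has `2 ^ (r - i)` preimages. -/
theorem card_covers {n d : ℕ} {C : Submodule (ZMod 2) (Fin n → ZMod 2)}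
    (hd : ∀ c ∈ C, c ≠ 0 → d ≤ wt c) {S : Finset (Fin n)} (hS : S.card < d) :
    ((dualFin C).filter fun h => Covers h S).card =
      S.card * 2 ^ (Module.finrank (ZMod 2) (dualSub C) - S.card) := by
  have hsurj := restr_surjective hd hS
  have hfib : ∀ p : S → ZMod 2, (univ.filter fun g : dualSub C => restr C S g = p).card =
      2 ^ (Module.finrank (ZMod 2) (dualSub C) - S.card) := by
    have hconst : ∀ p q : S → ZMod 2, (univ.filter fun g : dualSub C => restr C S g = p).card =
        (univ.filter fun g : dualSub C => restr C S g = q).card := fun p q =>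
      AddMonoidHom.card_fiber_eq_of_mem_range (restr C S) (hsurj p) (hsurj q)
    intro p
    have h1 : ∑ q : S → ZMod 2, (univ.filter fun g : dualSub C => restr C S g = q).card =
        Fintype.card (dualSub C) := by
      rw [← Finset.card_univ]
      exact (Finset.card_eq_sum_card_fiberwise (fun _ _ => Finset.mem_coe.2 (Finset.mem_univ _))).symm
    rw [Finset.sum_congr rfl (fun q _ => hconst q p), Finset.sum_const, Finset.card_univ,
      Module.card_eq_pow_finrank (K := ZMod 2) (V := dualSub C), ZMod.card] at h1
    simp only [Fintype.card_fun, ZMod.card, Fintype.card_coe, smul_eq_mul] at h1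
    have h2 := card_le_finrank_dualSub hd hS
    rw [← Nat.add_sub_cancel' h2, pow_add] at h1
    simpa using h1
  have hunit : ((dualFin C).filter fun h => Covers h S) =
      (univ : Finset S).biUnion fun a =>
        (univ.filter fun g : dualSub C => restr C S g = Pi.single a 1).map
          (Function.Embedding.subtype _) := by
    ext h
    simp only [Finset.mem_filter, mem_dualFin, covers_iff_s15, Finset.mem_biUnion, Finset.mem_univ,
      true_and, Finset.mem_map, Function.Embedding.coe_subtype]
    constructor
    · rintro ⟨hh, a, haS, ha⟩
      refine ⟨⟨a, haS⟩, ⟨h, hh⟩, ?_, rfl⟩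
      ext j
      simp only [Pi.single_apply, Subtype.ext_iff]
      exact ha j j.2
    · rintro ⟨a, g, hg, rfl⟩
      refine ⟨g.2, a, a.2, fun j hj => ?_⟩
      have := congrFun hg ⟨j, hj⟩
      simp only [Pi.single_apply, Subtype.ext_iff] at this
      exact this
  rw [hunit, Finset.card_biUnion]
  · simp [hfib]
  · intro a _ b _ hab
    rw [Function.onFun, Finset.disjoint_left]
    simp only [Finset.mem_map, Finset.mem_filter, Finset.mem_univ, true_and,
      Function.Embedding.coe_subtype, not_exists, not_and]
    rintro _ ⟨g, hg, rfl⟩ g' hg' hgg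
    have : g' = g := Subtype.ext hgg
    subst this
    rw [hg'] at hg
    have := congrFun hg b
    simp [hab.symm] at this

/-- If the rows in `R` cover every set of size `1, …, d - 1`, they span a space of dimension at
least `d - 1`: every nonzero vector orthogonal to `R` has weight at least `d`, since a row covering
its support would have inner product `1` with it. -/
theorem le_finrank_span_of_covers {n d : ℕ} (hn : d ≤ n) (hd1 : 1 ≤ d)
    (R : Finset (Fin n → ZMod 2))
    (hR : ∀ S : Finset (Fin n), 1 ≤ S.card → S.card ≤ d - 1 → ∃ h ∈ R, Covers h S) :
    d - 1 ≤ Module.finrank (ZMod 2) (Submodule.span (ZMod 2) (R : Set (Fin n → ZMod 2))) := by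
  set V := Submodule.span (ZMod 2) (R : Set (Fin n → ZMod 2)) with hV
  have hd : ∀ c ∈ dualSub V, c ≠ 0 → d ≤ wt c := by
    intro c hc hc0
    by_contra hlt
    have hpos : 1 ≤ wt c := by
      obtain ⟨j, hj⟩ := Function.ne_iff.1 hc0
      exact Finset.card_pos.2 ⟨j, by simpa using hj⟩
    obtain ⟨h, hhR, hcov⟩ := hR (univ.filter fun j => c j ≠ 0) hpos (by unfold wt at hlt; omega)
    obtain ⟨a, haS, ha⟩ := covers_iff_s15.1 hcov
    have hz := mem_dualSub.1 hc h (Submodule.subset_span hhR)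
    rw [Finset.sum_eq_single a] at hz
    · rw [ha a haS, if_pos rfl, mul_one] at hz
      exact (Finset.mem_filter.1 haS).2 hz
    · intro j _ hja
      by_cases hj : c j = 0
      · simp [hj]
      · rw [ha j (by simpa using hj), if_neg hja, mul_zero]
    · simp
  obtain ⟨S, -, hS⟩ := Finset.exists_subset_card_eq (s := (univ : Finset (Fin n))) (n := d - 1)
    (by simp; omega)
  have := card_le_finrank_dualSub hd (S := S) (by omega)
  rwa [dualSub_dualSub, hS] at this

/-- A spanning set of a subspace `V ≤ W` extends to one of `W` by `dim W - dim V` vectors. -/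
theorem exists_span_extension {n : ℕ} (W : Submodule (ZMod 2) (Fin n → ZMod 2))
    (R : Finset (Fin n → ZMod 2)) (hR : ∀ h ∈ R, h ∈ W) :
    ∃ R' : Finset (Fin n → ZMod 2), R ⊆ R' ∧
      Submodule.span (ZMod 2) (R' : Set (Fin n → ZMod 2)) = W ∧
      R'.card ≤ R.card + (Module.finrank (ZMod 2) W -
        Module.finrank (ZMod 2) (Submodule.span (ZMod 2) (R : Set (Fin n → ZMod 2)))) := by
  classical
  generalize hs : Module.finrank (ZMod 2) W - Module.finrank (ZMod 2)
    (Submodule.span (ZMod 2) (R : Set (Fin n → ZMod 2))) = s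
  induction s using Nat.strong_induction_on generalizing R with
  | _ s ih =>
    have hVW : Submodule.span (ZMod 2) (R : Set (Fin n → ZMod 2)) ≤ W := Submodule.span_le.2 hR
    rcases Nat.eq_zero_or_pos s with rfl | hpos
    · exact ⟨R, subset_rfl, Submodule.eq_of_le_of_finrank_le hVW (by omega), by simp⟩
    have hne : ¬ W ≤ Submodule.span (ZMod 2) (R : Set (Fin n → ZMod 2)) := fun h => by
      have := Submodule.finrank_mono h
      omega
    obtain ⟨w, hwW, hwV⟩ := Set.not_subset.1 hne
    have hlt : Submodule.span (ZMod 2) (R : Set (Fin n → ZMod 2)) <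
        Submodule.span (ZMod 2) ((insert w R : Finset _) : Set (Fin n → ZMod 2)) := by
      refine lt_of_le_of_ne (Submodule.span_mono (by simp)) fun h => hwV ?_
      rw [h]
      exact Submodule.subset_span (by simp)
    have h1 := Submodule.finrank_lt_finrank_of_lt hlt
    have hR' : ∀ h ∈ insert w R, h ∈ W := by
      intro h hh
      rcases Finset.mem_insert.1 hh with rfl | hh
      · exact hwW
      · exact hR h hh
    have hins : (insert w R).card ≤ R.card + 1 := Finset.card_insert_le _ _
    obtain ⟨R', hsub, hspan, hcard⟩ := ih _ (by omega) (insert w R) hR' rfl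
    exact ⟨R', (Finset.subset_insert _ _).trans hsub, hspan, by omega⟩

/-! ### Averaging over choices of covering words -/

open Classical in
/-- Averaging over all `s`-subsets `X` of `U`: if every `S ∈ T` is covered by exactly `m S` elements
of `U`, some `X` leaves at most the expected number of members of `T` uncovered. The elements of
`X` are found one at a time by conditional expectations, which needs no sign condition on the
factors. -/
theorem exists_le_expected {α β : Type*} (cov : α → β → Prop) (m : β → ℕ) (s : ℕ) :
    ∀ (U : Finset α) (T : Finset β), s ≤ U.card →
      (∀ S ∈ T, (U.filter fun h => cov h S).card = m S) →
      ∃ X ⊆ U, X.card = s ∧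
        ((T.filter fun S => ∀ h ∈ X, ¬ cov h S).card : ℝ) ≤
          ∑ S ∈ T, ∏ l ∈ range s, (1 - (m S : ℝ) / ((U.card : ℝ) - l)) := by
  induction s with
  | zero =>
    intro U T _ _
    exact ⟨∅, by simp, by simp, by simp⟩
  | succ s ih =>
    intro U T hs hm
    have hU : 0 < U.card := by omega
    have hU' : (0 : ℝ) < U.card := by exact_mod_cast hU
    set w : β → ℝ := fun S => ∏ l ∈ range s, (1 - (m S : ℝ) / ((U.card : ℝ) - (l + 1))) with hw
    have key : ∑ h ∈ U, ∑ S ∈ T, (if cov h S then 0 else w S) ≤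
        ∑ _h ∈ U, ∑ S ∈ T, w S * (1 - (m S : ℝ) / U.card) := by
      rw [Finset.sum_comm, Finset.sum_const, nsmul_eq_mul, Finset.mul_sum]
      refine le_of_eq (Finset.sum_congr rfl fun S hS => ?_)
      have h1 : ∑ h ∈ U, (if cov h S then 0 else w S) =
          ((U.filter fun h => ¬ cov h S).card : ℝ) * w S := by
        rw [Finset.sum_ite, Finset.sum_const_zero, zero_add, Finset.sum_const, nsmul_eq_mul]
      have h2 : (m S : ℝ) + ((U.filter fun h => ¬ cov h S).card : ℝ) = U.card := by
        rw [← hm S hS]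
        exact_mod_cast Finset.card_filter_add_card_filter_not (s := U) (fun h => cov h S)
      rw [h1, eq_sub_of_add_eq' h2]
      field_simp
    obtain ⟨h, hhU, hh⟩ := Finset.exists_le_of_sum_le (Finset.card_pos.1 hU) key
    obtain ⟨X, hXU, hXc, hX⟩ := ih (U.erase h) (T.filter fun S => ¬ cov h S)
      (by rw [Finset.card_erase_of_mem hhU]; omega) (by
        intro S hS
        obtain ⟨hST, hSh⟩ := Finset.mem_filter.1 hS
        rw [← hm S hST]
        congr 1
        ext g
        simp only [Finset.mem_filter, Finset.mem_erase]
        constructor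
        · rintro ⟨⟨-, h1⟩, h2⟩
          exact ⟨h1, h2⟩
        · rintro ⟨h1, h2⟩
          exact ⟨⟨fun h3 => hSh (h3 ▸ h2), h1⟩, h2⟩)
    have hhX : h ∉ X := fun h1 => Finset.notMem_erase h U (hXU h1)
    refine ⟨insert h X, ?_, by rw [Finset.card_insert_of_notMem hhX, hXc], ?_⟩
    · exact Finset.insert_subset hhU (hXU.trans (Finset.erase_subset _ _))
    · have e1 : (T.filter fun S => ∀ g ∈ insert h X, ¬ cov g S) =
          ((T.filter fun S => ¬ cov h S).filter fun S => ∀ g ∈ X, ¬ cov g S) := by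
        ext S
        simp only [Finset.mem_filter, Finset.forall_mem_insert, and_assoc]
      rw [e1]
      refine hX.trans ?_
      have e2 : ∀ S, ∏ l ∈ range s, (1 - (m S : ℝ) / (((U.erase h).card : ℝ) - l)) = w S := by
        intro S
        refine Finset.prod_congr rfl fun l _ => ?_
        rw [Finset.card_erase_of_mem hhU, Nat.cast_sub hU]
        push_cast
        ring_nf
      simp only [e2]
      rw [Finset.sum_filter]
      calc _ = ∑ S ∈ T, (if cov h S then 0 else w S) :=
            Finset.sum_congr rfl fun S _ => by split_ifs <;> rfl
        _ ≤ _ := hh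
        _ = _ := Finset.sum_congr rfl fun S _ => by
          rw [Finset.prod_range_succ']
          simp [hw]

theorem prod_factor_nonneg {M m : ℕ} (hm : m < M) (t : ℕ) (ht : t < M) :
    0 ≤ ∏ l ∈ range t, (1 - (m : ℝ) / ((M : ℝ) - (l + 1))) := by
  rcases Nat.lt_or_ge (M - m - 1) t with h | h
  · refine le_of_eq (Finset.prod_eq_zero (Finset.mem_range.2 h) ?_).symm
    have h1 : (M : ℝ) - (((M - m - 1 : ℕ) : ℝ) + 1) = m := by
      have : (M : ℝ) = ((M - m - 1 : ℕ) : ℝ) + 1 + m := by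
        exact_mod_cast (by omega : M = M - m - 1 + 1 + m)
      linarith
    rw [h1]
    -- `M - m - 1 < t < M` excludes `m = 0`, where the junk value `0 / 0 = 0` would intervene
    have hm0 : (m : ℝ) ≠ 0 := by
      have : m ≠ 0 := by omega
      exact_mod_cast this
    rw [div_self hm0, sub_self]
  · refine Finset.prod_nonneg fun l hl => ?_
    have hl' := Finset.mem_range.1 hl
    have h1 : (m : ℝ) + (l + 1) + 1 ≤ M + 1 := by
      exact_mod_cast (by omega : m + (l + 1) + 1 ≤ M + 1)
    have h2 : (l : ℝ) + 1 + 1 ≤ M := by exact_mod_cast (by omega : l + 1 + 1 ≤ M)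
    rw [sub_nonneg, div_le_one (by linarith)]
    linarith

theorem le_choose_of_pos_of_lt {N t : ℕ} (h1 : 1 ≤ t) (h2 : t < N) : N ≤ N.choose t := by
  induction N generalizing t with
  | zero => omega
  | succ N ih =>
    obtain ⟨s, rfl⟩ : ∃ s, t = s + 1 := ⟨t - 1, by omega⟩
    rw [Nat.choose_succ_succ']
    rcases Nat.lt_or_ge (s + 1) N with h | h
    · have := ih h1 h
      have := Nat.choose_pos (n := N) (k := s) (by omega)
      omega
    · have : N = s + 1 := by omega
      subst this
      simp [Nat.choose_succ_self_right]

theorem prod_factor_top {M t : ℕ} (ht : t < M) :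
    (∏ l ∈ range t, (1 - (M : ℝ) / ((M : ℝ) - (l + 1)))) * ((M - 1).choose t : ℝ) = (-1) ^ t := by
  induction t with
  | zero => simp
  | succ t ih =>
    have h1 := ih (by omega)
    rw [Finset.prod_range_succ, pow_succ, ← h1]
    have h2 : ((M - 1).choose (t + 1) : ℝ) * (t + 1) = ((M - 1).choose t : ℝ) * (M - (t + 1)) := by
      have h3 := Nat.choose_succ_right_eq (M - 1) t
      have h4 : (M : ℝ) - (t + 1) = ((M - 1 - t : ℕ) : ℝ) := by
        have : (M : ℝ) = ((M - 1 - t : ℕ) : ℝ) + (t + 1) := by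
          exact_mod_cast (by omega : M = M - 1 - t + (t + 1))
        linarith
      rw [h4]
      exact_mod_cast h3
    have h5 : (M : ℝ) - (t + 1) ≠ 0 := by
      have : (t : ℝ) + 1 + 1 ≤ M := by exact_mod_cast (by omega : t + 1 + 1 ≤ M)
      linarith
    have h6 : (1 - (M : ℝ) / ((M : ℝ) - (t + 1))) = - (t + 1) / ((M : ℝ) - (t + 1)) := by
      field_simp
      ring
    rw [h6]
    field_simp
    linear_combination -(∏ l ∈ range t, (1 - (M : ℝ) / ((M : ℝ) - (l + 1)))) * h2

/-- The product of factors with `m = M` may be negative, but only slightly: its absolute value is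
`1 / (M - 1).choose t`. -/
theorem prod_factor_top_ge {M t : ℕ} (h1 : 1 ≤ t) (ht : t + 1 < M) :
    -(1 / ((M : ℝ) - 1)) ≤ ∏ l ∈ range t, (1 - (M : ℝ) / ((M : ℝ) - (l + 1))) := by
  have hp := prod_factor_top (M := M) (t := t) (by omega)
  have hc := le_choose_of_pos_of_lt h1 (by omega : t < M - 1)
  have hc' : (M : ℝ) - 1 ≤ ((M - 1).choose t : ℝ) := by
    have : ((M - 1 : ℕ) : ℝ) ≤ ((M - 1).choose t : ℝ) := by exact_mod_cast hc
    rwa [Nat.cast_sub (by omega), Nat.cast_one] at this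
  have hM : (2 : ℝ) < M := by exact_mod_cast (by omega : 2 < M)
  set p := ∏ l ∈ range t, (1 - (M : ℝ) / ((M : ℝ) - (l + 1)))
  have hge : (-1 : ℝ) ≤ (-1) ^ t := by
    rcases neg_one_pow_eq_or ℝ t with h | h
    · rw [h]
      norm_num
    · rw [h]
  rw [neg_le_iff_add_nonneg, ← sub_neg_eq_add]
  by_contra hlt
  push Not at hlt
  have h2 : p * ((M : ℝ) - 1) < -1 := by
    have h3 : p < -(1 / ((M : ℝ) - 1)) := by linarith
    calc p * ((M : ℝ) - 1) < -(1 / ((M : ℝ) - 1)) * ((M : ℝ) - 1) :=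
          mul_lt_mul_of_pos_right h3 (by linarith)
      _ = -1 := by
        have : (M : ℝ) - 1 ≠ 0 := by linarith
        field_simp
  have hneg : p < 0 := by
    by_contra h4
    push Not at h4
    nlinarith
  nlinarith

open Classical in
/-- The starting step when the zero word is already a row of `H⁰`. That row is useless, so `t + 1`
words may be chosen from the `M` remaining ones; the bound, however, uses the denominators
`M - 1, …, M - t`. Members `S` with `m S = M` are covered by any choice, but can contribute
negatively to the bound. Either the other members compensate for this, or the expected number of
uncovered sets is below `1`. -/
theorem exists_le_of_extra_choice {α β : Type*} (cov : α → β → Prop) (m : β → ℕ) (t : ℕ)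
    (U : Finset α) (T : Finset β) (ht : t < U.card)
    (hm : ∀ S ∈ T, (U.filter fun h => cov h S).card = m S) (hm1 : ∀ S ∈ T, 1 ≤ m S)
    (hu : ∀ S ∈ T, m S < U.card →
      (T.filter fun S => m S = U.card).card * (U.card - m S) ≤ m S * (U.card - 1)) :
    ∃ X ⊆ U, X.card = t + 1 ∧
      ((T.filter fun S => ∀ h ∈ X, ¬ cov h S).card = 0 ∨
        ((T.filter fun S => ∀ h ∈ X, ¬ cov h S).card : ℝ) ≤
          ∑ S ∈ T, ∏ l ∈ range t, (1 - (m S : ℝ) / ((U.card : ℝ) - (l + 1)))) := by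
  obtain ⟨X, hXU, hXc, hX⟩ := exists_le_expected cov m (t + 1) U T ht hm
  refine ⟨X, hXU, hXc, ?_⟩
  have hmle : ∀ S ∈ T, m S ≤ U.card := fun S hS => hm S hS ▸ Finset.card_filter_le _ _
  set M := U.card with hM
  have hM0 : (0 : ℝ) < M := by exact_mod_cast (by omega : 0 < M)
  set q : β → ℝ := fun S => ∏ l ∈ range t, (1 - (m S : ℝ) / ((M : ℝ) - (l + 1))) with hq
  set N := (T.filter fun S => ∀ h ∈ X, ¬ cov h S).card with hN
  have hX' : (N : ℝ) ≤ ∑ S ∈ T, q S * (1 - (m S : ℝ) / M) := by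
    refine hX.trans (le_of_eq (Finset.sum_congr rfl fun S _ => ?_))
    rw [Finset.prod_range_succ']
    simp [hq]
  rcases Nat.eq_zero_or_pos t with rfl | ht0
  · right
    refine hX'.trans (Finset.sum_le_sum fun S _ => ?_)
    have : (0 : ℝ) ≤ (m S : ℝ) / M := by positivity
    simp [hq, this]
  rcases Nat.lt_or_ge (t + 1) M with ht1 | ht1
  swap
  · left
    -- here `X` is all of `U`, and every member of `T` is covered by some element of `U`
    have hXeq : X = U := Finset.eq_of_subset_of_card_le hXU (by omega)
    rw [hN, Finset.card_eq_zero, Finset.filter_eq_empty_iff]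
    intro S hS hcov
    have h1 := hm1 S hS
    rw [← hm S hS] at h1
    obtain ⟨g, hg⟩ := Finset.card_pos.1 h1
    obtain ⟨hgU, hgS⟩ := Finset.mem_filter.1 hg
    exact hcov g (hXeq ▸ hgU) hgS
  have hM1 : (0 : ℝ) < (M : ℝ) - 1 := by
    have : (2 : ℝ) < M := by exact_mod_cast (by omega : 2 < M)
    linarith
  set T1 := T.filter fun S => m S = M with hT1
  set T2 := T.filter fun S => ¬ m S = M with hT2
  have hT2lt : ∀ S ∈ T2, S ∈ T ∧ m S < M := fun S hS => by
    obtain ⟨h1, h2⟩ := Finset.mem_filter.1 hS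
    exact ⟨h1, lt_of_le_of_ne (hmle S h1) h2⟩
  have hq2 : ∀ S ∈ T2, 0 ≤ q S := fun S hS => prod_factor_nonneg (hT2lt S hS).2 t ht
  have hq1 : -((T1.card : ℝ) * (1 / ((M : ℝ) - 1))) ≤ ∑ S ∈ T1, q S := by
    rw [← mul_neg, ← nsmul_eq_mul]
    refine Finset.card_nsmul_le_sum _ _ _ fun S hS => ?_
    have : m S = M := (Finset.mem_filter.1 hS).2
    simp only [hq, this]
    exact prod_factor_top_ge ht0 ht1
  have hE1 : ∑ S ∈ T1, q S * (1 - (m S : ℝ) / M) = 0 :=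
    Finset.sum_eq_zero fun S hS => by
      rw [(Finset.mem_filter.1 hS).2, div_self hM0.ne', sub_self, mul_zero]
  rw [← Finset.sum_filter_add_sum_filter_not T (fun S => m S = M), hE1, zero_add] at hX'
  rw [← Finset.sum_filter_add_sum_filter_not T (fun S => m S = M)]
  have hE2 : ∑ S ∈ T2, q S * (1 - (m S : ℝ) / M) =
      ∑ S ∈ T2, q S - ∑ S ∈ T2, q S * (m S : ℝ) / M := by
    rw [← Finset.sum_sub_distrib]
    exact Finset.sum_congr rfl fun S _ => by ring
  rcases le_or_gt ((T1.card : ℝ) * (1 / ((M : ℝ) - 1))) (∑ S ∈ T2, q S * (m S : ℝ) / M) with h | h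
  · right
    linarith
  · left
    have hA : 0 ≤ ∑ S ∈ T2, q S * (m S : ℝ) / M := Finset.sum_nonneg fun S hS => by
      have := hq2 S hS
      positivity
    have hu0 : (0 : ℝ) < T1.card := by
      by_contra h0
      have h00 : (T1.card : ℝ) = 0 := le_antisymm (not_lt.1 h0) (by positivity)
      rw [h00] at h
      linarith
    have hle : (∑ S ∈ T2, q S * (1 - (m S : ℝ) / M)) * T1.card ≤
        (∑ S ∈ T2, q S * (m S : ℝ) / M) * ((M : ℝ) - 1) := by
      rw [Finset.sum_mul, Finset.sum_mul]
      refine Finset.sum_le_sum fun S hS => ?_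
      have h1 := hu S (hT2lt S hS).1 (hT2lt S hS).2
      have h2 : (T1.card : ℝ) * ((M : ℝ) - m S) ≤ m S * ((M : ℝ) - 1) := by
        have h3 : ((T1.card * (M - m S) : ℕ) : ℝ) ≤ ((m S * (M - 1) : ℕ) : ℝ) := by
          exact_mod_cast h1
        rw [Nat.cast_mul, Nat.cast_mul, Nat.cast_sub (hT2lt S hS).2.le,
          Nat.cast_sub (by omega)] at h3
        simpa using h3
      have h4 : q S * (1 - (m S : ℝ) / M) * T1.card =
          q S / M * ((T1.card : ℝ) * ((M : ℝ) - m S)) := by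
        field_simp
      have h5 : q S * (m S : ℝ) / M * ((M : ℝ) - 1) = q S / M * (m S * ((M : ℝ) - 1)) := by
        ring
      rw [h4, h5]
      exact mul_le_mul_of_nonneg_left h2 (div_nonneg (hq2 S hS) hM0.le)
    have hlt : (∑ S ∈ T2, q S * (m S : ℝ) / M) * ((M : ℝ) - 1) < T1.card := by
      calc _ < (T1.card : ℝ) * (1 / ((M : ℝ) - 1)) * ((M : ℝ) - 1) :=
            mul_lt_mul_of_pos_right h hM1
        _ = T1.card := by field_simp
    have h6 : (N : ℝ) < 1 := by
      by_contra h7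
      nlinarith
    have : N < 1 := by exact_mod_cast h6
    omega

/-! ### Sets covered by all unused words -/

theorem mul_two_pow_antitone {r i j : ℕ} (hi : 1 ≤ i) (hij : i ≤ j) (hj : j ≤ r) :
    j * 2 ^ (r - j) ≤ i * 2 ^ (r - i) := by
  induction j, hij using Nat.le_induction with
  | base => exact le_rfl
  | succ j hij ih =>
    refine le_trans ?_ (ih (by omega))
    have h : r - j = (r - (j + 1)) + 1 := by omega
    rw [h, pow_succ, mul_comm (2 ^ (r - (j + 1))) 2, ← mul_assoc]
    exact Nat.mul_le_mul_right _ (by omega)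

/-- If `S₁` and `S₂` are covered by the same dual codewords and `|S₂| ≤ d - 2`, then `S₁ ⊈ S₂` forces
`S₁` to be a pair disjoint from `S₂`, and `|S₂| ≥ d - 2`. Indeed, adding to a word covering both sets
a dual codeword `p` that vanishes on `S₂` but not at `x ∈ S₁ \ S₂` must preserve coverage of `S₁`. -/
theorem same_covers {n d : ℕ} {C : Submodule (ZMod 2) (Fin n → ZMod 2)}
    (hd : ∀ c ∈ C, c ≠ 0 → d ≤ wt c) {S₁ S₂ : Finset (Fin n)} (h1 : S₁.card < d)
    (h2 : S₂.card + 1 < d) (hcov : ∀ h ∈ dualSub C, (Covers h S₁ ↔ Covers h S₂))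
    {x : Fin n} (hx1 : x ∈ S₁) (hx2 : x ∉ S₂) :
    S₁.card = 2 ∧ Disjoint S₁ S₂ ∧ d ≤ S₂.card + 2 := by
  have hadd : ∀ p ∈ dualSub C, (∀ j ∈ S₂, p j = 0) → ∀ a ∈ S₁,
      ∃ b ∈ S₁, ∀ j ∈ S₁, (if j = a then 1 else 0) + p j = if j = b then 1 else 0 := by
    intro p hp hp0 a ha
    obtain ⟨h, hh, hha⟩ := exists_dual_prescribed hd h1 (fun j => if j = a then 1 else 0)
    have hc2 := covers_iff_s15.1 ((hcov h hh).1 (covers_iff_s15.2 ⟨a, ha, hha⟩))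
    have hc3 : Covers (h + p) S₂ := by
      obtain ⟨b, hb, hbb⟩ := hc2
      exact covers_iff_s15.2 ⟨b, hb, fun j hj => by simp [hp0 j hj, hbb j hj]⟩
    obtain ⟨b, hb, hbb⟩ := covers_iff_s15.1 ((hcov _ (Submodule.add_mem _ hh hp)).2 hc3)
    refine ⟨b, hb, fun j hj => ?_⟩
    rw [← hbb j hj, ← hha j hj]
    rfl
  -- any admissible `p` equals `1` at exactly one further position of `S₁`
  have hp : ∀ p ∈ dualSub C, (∀ j ∈ S₂, p j = 0) → p x = 1 →
      ∃ b, b ≠ x ∧ S₁ = {x, b} ∧ p b = 1 := by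
    intro p hp hp0 hpx
    obtain ⟨b, hb, hbb⟩ := hadd p hp hp0 x hx1
    have hbx : b ≠ x := by
      rintro rfl
      have := hbb b hb
      simp [hpx] at this
    have hpb : p b = 1 := by simpa [hbx] using hbb b hb
    refine ⟨b, hbx, ?_, hpb⟩
    ext c
    simp only [Finset.mem_insert, Finset.mem_singleton]
    constructor
    · intro hc
      by_contra hne
      push Not at hne
      obtain ⟨e, he, hee⟩ := hadd p hp hp0 c hc
      have e1 := hee x hx1
      have e2 := hee b hb
      rw [if_neg hne.1.symm, hpx] at e1
      rw [if_neg hne.2.symm, hpb] at e2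
      have e1' : x = e := by
        by_contra h
        simp [h] at e1
      have e2' : b = e := by
        by_contra h
        simp [h] at e2
      exact hbx (e2'.trans e1'.symm)
    · rintro (rfl | rfl) <;> assumption
  obtain ⟨p, hpW, hpp⟩ := exists_dual_prescribed hd (S := insert x S₂)
    (by rw [Finset.card_insert_of_notMem hx2]; exact h2) (fun j => if j = x then 1 else 0)
  have hpx : p x = 1 := by simpa using hpp x (Finset.mem_insert_self _ _)
  have hp0 : ∀ j ∈ S₂, p j = 0 := fun j hj => by
    have : j ≠ x := fun h => hx2 (h ▸ hj)
    simpa [this] using hpp j (Finset.mem_insert_of_mem hj)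
  obtain ⟨b, hbx, hS1, hpb⟩ := hp p hpW hp0 hpx
  have hb2 : b ∉ S₂ := fun h => by simp [hp0 b h] at hpb
  refine ⟨by rw [hS1, Finset.card_pair hbx.symm], ?_, ?_⟩
  · rw [hS1]
    simp [hx2, hb2]
  · by_contra hlt
    push Not at hlt
    obtain ⟨g, hgW, hgg⟩ := exists_dual_prescribed hd (S := insert b (insert x S₂))
      (by
        have := Finset.card_insert_le b (insert x S₂)
        have := Finset.card_insert_le x S₂
        omega) (fun j => if j = x then 1 else 0)
    have hgx : g x = 1 := by simpa using hgg x (by simp)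
    have hgb : g b = 0 := by simpa [hbx] using hgg b (by simp)
    have hg0 : ∀ j ∈ S₂, g j = 0 := fun j hj => by
      have : j ≠ x := fun h => hx2 (h ▸ hj)
      simpa [this] using hgg j (by simp [hj])
    obtain ⟨b', hbx', hS1', hgb'⟩ := hp g hgW hg0 hgx
    have : b' ∈ S₁ := by rw [hS1']; simp
    rw [hS1] at this
    have hbb : b' = b := by simpa [hbx'] using this
    have hgb1 : g b = 1 := hbb ▸ hgb'
    exact zero_ne_one (hgb.symm.trans hgb1)

/-- For `d ≥ 3` the columns of a parity-check matrix are pairwise distinct, hence `n ≤ 2 ^ r`. -/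
theorem length_le_two_pow {n d : ℕ} {C : Submodule (ZMod 2) (Fin n → ZMod 2)}
    (hd : ∀ c ∈ C, c ≠ 0 → d ≤ wt c) (h3 : 3 ≤ d) :
    n ≤ 2 ^ Module.finrank (ZMod 2) (dualSub C) := by
  classical
  let f : Fin n → Module.Dual (ZMod 2) (dualSub C) := fun j =>
    (LinearMap.proj j).comp (dualSub C).subtype
  have hf : Function.Injective f := by
    intro i j hij
    by_contra hne
    obtain ⟨h, hh, hhp⟩ := exists_dual_prescribed hd (S := {i, j})
      (by rw [Finset.card_pair hne]; omega) (fun l => if l = i then 1 else 0)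
    have h1 : h i = h j := LinearMap.congr_fun hij ⟨h, hh⟩
    rw [hhp i (by simp), hhp j (by simp)] at h1
    simp [Ne.symm hne] at h1
  have : Finite (Module.Dual (ZMod 2) (dualSub C)) := Module.finite_of_finite (ZMod 2)
  have := Nat.card_le_card_of_injective f hf
  rw [Module.natCard_eq_pow_finrank (K := ZMod 2) (V := Module.Dual (ZMod 2) (dualSub C)),
    Subspace.dual_finrank_eq] at this
  simpa using this

open Classical in
/-- Few members of `T` are covered by all words of `U` when some member `S'` is not: by `same_covers`
there is at most one, or they are disjoint pairs and `d ≤ 4`, in which case `|S'| = 3` and there are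
at most `n ≤ 2 ^ r` of them. This yields the numerical hypothesis of `exists_le_of_extra_choice`. -/
theorem top_count_bound {n d : ℕ} {C : Submodule (ZMod 2) (Fin n → ZMod 2)}
    (hd : ∀ c ∈ C, c ≠ 0 → d ≤ wt c) (T : Finset (Finset (Fin n)))
    (hT : ∀ S ∈ T, 1 ≤ S.card ∧ S.card < d) (U : Finset (Fin n → ZMod 2))
    (hU : ∀ S ∈ T, ∀ h ∈ dualSub C, Covers h S → h ∈ U) (r : ℕ)
    (hr : Module.finrank (ZMod 2) (dualSub C) = r)
    (S' : Finset (Fin n)) (hS' : S' ∈ T) (hlt : S'.card * 2 ^ (r - S'.card) < U.card) :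
    (T.filter fun S => S.card * 2 ^ (r - S.card) = U.card).card *
      (U.card - S'.card * 2 ^ (r - S'.card)) ≤
        S'.card * 2 ^ (r - S'.card) * (U.card - 1) := by
  set T1 := T.filter fun S => S.card * 2 ^ (r - S.card) = U.card with hT1
  have hpos : 1 ≤ S'.card * 2 ^ (r - S'.card) :=
    Nat.mul_pos (hT S' hS').1 (by positivity)
  rcases Nat.lt_or_ge 1 T1.card with h2 | h1
  swap
  · calc _ ≤ 1 * (U.card - S'.card * 2 ^ (r - S'.card)) := Nat.mul_le_mul_right _ h1
      _ ≤ 1 * (U.card - 1) := by omega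
      _ ≤ _ := Nat.mul_le_mul_right _ hpos
  have hsize : ∀ S ∈ T1, S.card < S'.card := by
    intro S hS
    obtain ⟨hST, hSe⟩ := Finset.mem_filter.1 hS
    by_contra hge
    push Not at hge
    have hle := card_le_finrank_dualSub hd (hT S hST).2
    have := mul_two_pow_antitone (hT S' hS').1 hge (hr ▸ hle)
    omega
  have hall : ∀ S ∈ T1, ∀ h ∈ dualSub C, (Covers h S ↔ h ∈ U) := by
    intro S hS h hh
    obtain ⟨hST, hSe⟩ := Finset.mem_filter.1 hS
    have hsub : ((dualFin C).filter fun h => Covers h S) ⊆ U := fun g hg => by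
      obtain ⟨hg1, hg2⟩ := Finset.mem_filter.1 hg
      exact hU S hST g (mem_dualFin.1 hg1) hg2
    have heq := Finset.eq_of_subset_of_card_le hsub
      (by rw [card_covers hd (hT S hST).2, hr, hSe])
    rw [← heq]
    simp [mem_dualFin, hh]
  have hdT1 : ∀ S ∈ T1, S.card + 1 < d := fun S hS => by
    have := hsize S hS
    have := (hT S' hS').2
    omega
  have hsub : ∀ S₁ ∈ T1, ∀ S₂ ∈ T1, ∀ x ∈ S₁, x ∉ S₂ →
      S₁.card = 2 ∧ Disjoint S₁ S₂ ∧ d ≤ S₂.card + 2 := fun S₁ hS₁ S₂ hS₂ x hx1 hx2 =>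
    same_covers hd (by have := hdT1 S₁ hS₁; omega) (hdT1 S₂ hS₂)
      (fun h hh => (hall S₁ hS₁ h hh).trans (hall S₂ hS₂ h hh).symm) hx1 hx2
  have hne : ∀ S ∈ T1, S.Nonempty := fun S hS =>
    Finset.card_pos.1 (hT S (Finset.mem_filter.1 hS).1).1
  have hpair : ∀ S₁ ∈ T1, ∀ S₂ ∈ T1, S₁ ≠ S₂ → S₁.card = 2 ∧ Disjoint S₁ S₂ ∧ d ≤ 4 := by
    intro S₁ hS₁ S₂ hS₂ h12
    by_cases hs : S₁ ⊆ S₂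
    · exfalso
      obtain ⟨x, hx2, hx1⟩ := Finset.not_subset.1 fun h => h12 (hs.antisymm h)
      obtain ⟨-, hdis, -⟩ := hsub S₂ hS₂ S₁ hS₁ x hx2 hx1
      obtain ⟨y, hy⟩ := hne S₁ hS₁
      exact Finset.disjoint_left.1 hdis (hs hy) hy
    · obtain ⟨x, hx1, hx2⟩ := Finset.not_subset.1 hs
      obtain ⟨hc1, hdis, hd2⟩ := hsub S₁ hS₁ S₂ hS₂ x hx1 hx2
      obtain ⟨y, hy⟩ := hne S₂ hS₂
      obtain ⟨hc2, -, -⟩ := hsub S₂ hS₂ S₁ hS₁ y hy fun h => Finset.disjoint_left.1 hdis h hy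
      exact ⟨hc1, hdis, by omega⟩
  obtain ⟨S₁, hS₁, S₂, hS₂, h12⟩ := Finset.one_lt_card.1 h2
  obtain ⟨hc1, -, hd4⟩ := hpair S₁ hS₁ S₂ hS₂ h12
  have hS1S' := hsize S₁ hS₁
  have hS'd := (hT S' hS').2
  have hS'3 : S'.card = 3 := by omega
  have hr3 : 3 ≤ r := hr ▸ hS'3 ▸ card_le_finrank_dualSub hd hS'd
  have hun : T1.card ≤ n := by
    have h := Finset.card_le_card_biUnion (s := T1) (f := id)
      (fun A hA B hB hAB => (hpair A hA B hB hAB).2.1) (fun A hA => hne A hA)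
    refine h.trans ((Finset.card_le_univ _).trans ?_)
    simp
  have hn := length_le_two_pow hd (by omega)
  rw [hr] at hn
  have hUc : S₁.card * 2 ^ (r - S₁.card) = U.card := (Finset.mem_filter.1 hS₁).2
  obtain ⟨s, rfl⟩ : ∃ s, r = s + 3 := ⟨r - 3, by omega⟩
  have hy : 1 ≤ 2 ^ s := Nat.one_le_two_pow
  rw [hc1, show s + 3 - 2 = s + 1 by omega, pow_succ] at hUc
  rw [hS'3, show s + 3 - 3 = s by omega, ← hUc]
  rw [show 2 ^ (s + 3) = 8 * 2 ^ s by ring] at hn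
  generalize 2 ^ s = y at *
  rw [show 2 * (y * 2) - 3 * y = y by omega]
  calc T1.card * y ≤ (3 * (2 * (y * 2) - 1)) * y := Nat.mul_le_mul_right _ (by omega)
    _ = _ := by ring

/-! ### The two phases of the construction -/

/-- The sets of size `1, …, d - 1` covered by no word of `R`. -/
noncomputable def uncov {n : ℕ} (d : ℕ) (R : Finset (Fin n → ZMod 2)) : Finset (Finset (Fin n)) := by
  classical exact univ.filter fun S => 1 ≤ S.card ∧ S.card < d ∧ ∀ h ∈ R, ¬ Covers h S

theorem mem_uncov {n d : ℕ} {R : Finset (Fin n → ZMod 2)} {S : Finset (Fin n)} :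
    S ∈ uncov d R ↔ 1 ≤ S.card ∧ S.card < d ∧ ∀ h ∈ R, ¬ Covers h S := by
  simp [uncov]

theorem uncov_union {n d : ℕ} (R X : Finset (Fin n → ZMod 2))
    [DecidablePred fun S : Finset (Fin n) => ∀ h ∈ X, ¬ Covers h S] :
    uncov d (R ∪ X) = (uncov d R).filter fun S => ∀ h ∈ X, ¬ Covers h S := by
  ext S
  simp only [mem_uncov, Finset.mem_filter, Finset.mem_union, or_imp, forall_and, and_assoc]

theorem not_covers_zero {n : ℕ} (S : Finset (Fin n)) : ¬ Covers 0 S := by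
  simp [Covers]

open Classical in
theorem uncov_erase_zero {n d : ℕ} (R : Finset (Fin n → ZMod 2)) :
    uncov d (R.erase 0) = uncov d R := by
  ext S
  simp only [mem_uncov, Finset.mem_erase]
  refine and_congr_right fun _ => and_congr_right fun _ => ⟨fun h g hg => ?_, fun h g hg => h g hg.2⟩
  by_cases hg0 : g = 0
  · rw [hg0]
    exact not_covers_zero S
  · exact h g ⟨hg0, hg⟩

open Classical in
/-- Every word covering a set in `uncov d R` lies outside `R ∪ {0}`, so the words covering it can be
counted in any `U` between `dualFin C \ (R ∪ {0})` and `dualFin C`. -/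
theorem card_covers_unused {n d : ℕ} {C : Submodule (ZMod 2) (Fin n → ZMod 2)}
    (hd : ∀ c ∈ C, c ≠ 0 → d ≤ wt c) {R U : Finset (Fin n → ZMod 2)}
    (hU : U ⊆ dualFin C) (hRU : ∀ h ∈ dualFin C, h ≠ 0 → h ∉ R → h ∈ U)
    {S : Finset (Fin n)} (hS : S ∈ uncov d R) :
    (U.filter fun h => Covers h S).card =
      S.card * 2 ^ (Module.finrank (ZMod 2) (dualSub C) - S.card) := by
  obtain ⟨-, h2, h3⟩ := mem_uncov.1 hS
  rw [← card_covers hd h2]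
  congr 1
  ext h
  simp only [Finset.mem_filter]
  constructor
  · rintro ⟨h4, h5⟩
    exact ⟨hU h4, h5⟩
  · rintro ⟨h4, h5⟩
    refine ⟨hRU h h4 ?_ fun h6 => h3 h h6 h5, h5⟩
    rintro rfl
    exact not_covers_zero S h5

open Classical in
/-- The first phase: the nonzero words of `R₀` extend to `|R₀| + t` nonzero dual codewords that leave
either no set or at most `D_t` sets uncovered, where `D_t` is written as a sum over the sets left
uncovered by `R₀`. The first alternative is needed because `D_t` may be negative. -/
theorem exists_first_phase {n d r : ℕ} {C : Submodule (ZMod 2) (Fin n → ZMod 2)}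
    (hd : ∀ c ∈ C, c ≠ 0 → d ≤ wt c) (hr : Module.finrank (ZMod 2) (dualSub C) = r)
    (R₀ : Finset (Fin n → ZMod 2)) (hR₀ : R₀ ⊆ dualFin C) (t : ℕ) (ht : t < 2 ^ r - R₀.card) :
    ∃ R ⊆ dualFin C, 0 ∉ R ∧ R₀.erase 0 ⊆ R ∧ R.card = R₀.card + t ∧
      ((uncov d R).card = 0 ∨ ((uncov d R).card : ℝ) ≤ ∑ S ∈ uncov d R₀, ∏ l ∈ range t,
        (1 - ((S.card * 2 ^ (r - S.card) : ℕ) : ℝ) /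
          ((2 : ℝ) ^ r - ((R₀.card : ℝ) + 1 + l)))) := by
  have hcard : (dualFin C).card = 2 ^ r := by rw [card_dualFin, hr]
  have hsd : (dualFin C \ R₀).card = 2 ^ r - R₀.card := by
    rw [Finset.card_sdiff_of_subset hR₀, hcard]
  by_cases h0 : (0 : Fin n → ZMod 2) ∈ R₀
  · have hUS : ∀ S ∈ uncov d R₀, ((dualFin C \ R₀).filter fun h => Covers h S).card =
        S.card * 2 ^ (r - S.card) := fun S hS => by
      rw [card_covers_unused hd Finset.sdiff_subset (fun h hh _ hR => by simp [hh, hR]) hS, hr]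
    obtain ⟨X, hXU, hXc, hX⟩ := exists_le_of_extra_choice (fun h S => Covers h S)
      (fun S : Finset (Fin n) => S.card * 2 ^ (r - S.card)) t (dualFin C \ R₀) (uncov d R₀)
      (by rw [hsd]; exact ht) hUS
      (fun S hS => Nat.mul_pos (mem_uncov.1 hS).1 (by positivity))
      (fun S hS hlt => top_count_bound hd (uncov d R₀)
        (fun S hS => ⟨(mem_uncov.1 hS).1, (mem_uncov.1 hS).2.1⟩) (dualFin C \ R₀)
        (fun S hS h hh hc => by
          simp only [Finset.mem_sdiff, mem_dualFin]
          exact ⟨hh, fun hR => (mem_uncov.1 hS).2.2 h hR hc⟩) r hr S hS hlt)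
    have hdisj : Disjoint (R₀.erase 0) X := by
      rw [Finset.disjoint_left]
      intro h h1 h2
      exact (Finset.mem_sdiff.1 (hXU h2)).2 (Finset.mem_of_mem_erase h1)
    refine ⟨R₀.erase 0 ∪ X, ?_, ?_, Finset.subset_union_left, ?_, ?_⟩
    · exact Finset.union_subset ((Finset.erase_subset _ _).trans hR₀)
        (hXU.trans Finset.sdiff_subset)
    · intro h
      rcases Finset.mem_union.1 h with h | h
      · simp at h
      · exact (Finset.mem_sdiff.1 (hXU h)).2 h0
    · rw [Finset.card_union_of_disjoint hdisj, hXc, Finset.card_erase_of_mem h0]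
      have := Finset.card_pos.2 ⟨_, h0⟩
      omega
    · rw [← uncov_erase_zero R₀, ← uncov_union, uncov_erase_zero] at hX
      rcases hX with h | h
      · exact Or.inl h
      refine Or.inr (h.trans (le_of_eq ?_))
      refine Finset.sum_congr rfl fun S _ => Finset.prod_congr rfl fun l _ => ?_
      rw [hsd, Nat.cast_sub (by omega)]
      push_cast
      ring_nf
  · have h0U : (0 : Fin n → ZMod 2) ∈ dualFin C \ R₀ := by
      simp [mem_dualFin, h0]
    set U := (dualFin C \ R₀).erase 0 with hU
    have hUc : U.card = 2 ^ r - R₀.card - 1 := by rw [hU, Finset.card_erase_of_mem h0U, hsd]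
    have hUsub : U ⊆ dualFin C := (Finset.erase_subset _ _).trans Finset.sdiff_subset
    obtain ⟨X, hXU, hXc, hX⟩ := exists_le_expected (fun h S => Covers h S)
      (fun S : Finset (Fin n) => S.card * 2 ^ (r - S.card)) t U (uncov d R₀) (by omega)
      (fun S hS => by
        rw [card_covers_unused hd hUsub (fun h hh hne hR => by simp [hU, hh, hR, hne]) hS, hr])
    have hdisj : Disjoint R₀ X := by
      rw [Finset.disjoint_left]
      intro h h1 h2
      exact (Finset.mem_sdiff.1 (Finset.mem_of_mem_erase (hXU h2))).2 h1
    refine ⟨R₀ ∪ X, Finset.union_subset hR₀ (hXU.trans hUsub), ?_,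
      (Finset.erase_subset _ _).trans Finset.subset_union_left, ?_, Or.inr ?_⟩
    · intro h
      rcases Finset.mem_union.1 h with h | h
      · exact h0 h
      · exact Finset.notMem_erase _ _ (hXU h)
    · rw [Finset.card_union_of_disjoint hdisj, hXc]
    · rw [← uncov_union] at hX
      refine hX.trans (le_of_eq ?_)
      refine Finset.sum_congr rfl fun S _ => Finset.prod_congr rfl fun l _ => ?_
      rw [hUc, Nat.cast_sub (by omega), Nat.cast_sub (by omega)]
      push_cast
      ring_nf

open Classical in
/-- The second phase: words are added one at a time, each covering at least the average number of
the sets still uncovered. Since every such set has at least `(d - 1) · 2 ^ (r - (d - 1))` covering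
words, the number of uncovered sets after `j` steps is zero or at most `P j`. -/
theorem exists_second_phase {n d r : ℕ} {C : Submodule (ZMod 2) (Fin n → ZMod 2)}
    (hd : ∀ c ∈ C, c ≠ 0 → d ≤ wt c) (hr : Module.finrank (ZMod 2) (dualSub C) = r)
    (hdr : d - 1 ≤ r) (hd2 : 2 ≤ d) (R : Finset (Fin n → ZMod 2)) (hR : R ⊆ dualFin C)
    (hR0 : 0 ∉ R) (P : ℕ → ℤ) (hP0 : (uncov d R).card = 0 ∨ ((uncov d R).card : ℤ) ≤ P 0)
    (hP : ∀ j, P (j + 1) = ⌊(1 - (((d - 1) * 2 ^ (r - (d - 1)) : ℕ) : ℝ) /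
      ((2 : ℝ) ^ r - ((R.card : ℝ) + j + 1))) * (P j : ℝ)⌋) (j : ℕ) :
    ∃ R' ⊆ dualFin C, 0 ∉ R' ∧ R ⊆ R' ∧ R'.card ≤ R.card + j ∧
      ((uncov d R').card = 0 ∨ (R'.card = R.card + j ∧ ((uncov d R').card : ℤ) ≤ P j)) := by
  induction j with
  | zero => exact ⟨R, hR, hR0, subset_rfl, by omega, hP0.imp id fun h => ⟨rfl, h⟩⟩
  | succ j ih =>
    obtain ⟨R', hR', hR'0, hRR', hc, h⟩ := ih
    rcases Nat.eq_zero_or_pos (uncov d R').card with hz | hpos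
    · exact ⟨R', hR', hR'0, hRR', by omega, Or.inl hz⟩
    obtain ⟨hcj, hPj⟩ := h.resolve_left hpos.ne'
    have hcard : (dualFin C).card = 2 ^ r := by rw [card_dualFin, hr]
    have h0U : (0 : Fin n → ZMod 2) ∈ dualFin C \ R' := by
      simp [mem_dualFin, hR'0]
    set U := (dualFin C \ R').erase 0 with hU
    have hUc : U.card = 2 ^ r - R'.card - 1 := by
      rw [hU, Finset.card_erase_of_mem h0U, Finset.card_sdiff_of_subset hR', hcard]
    have hUsub : U ⊆ dualFin C := (Finset.erase_subset _ _).trans Finset.sdiff_subset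
    have hUS : ∀ S ∈ uncov d R', (U.filter fun h => Covers h S).card =
        S.card * 2 ^ (r - S.card) := fun S hS => by
      rw [card_covers_unused hd hUsub (fun h hh hne hR => by simp [hU, hh, hR, hne]) hS, hr]
    set μ := (d - 1) * 2 ^ (r - (d - 1)) with hμ
    have hμ1 : 1 ≤ μ := Nat.mul_pos (by omega) (by positivity)
    have hμS : ∀ S ∈ uncov d R', μ ≤ S.card * 2 ^ (r - S.card) := fun S hS => by
      obtain ⟨h1, h2, -⟩ := mem_uncov.1 hS
      exact mul_two_pow_antitone h1 (by omega) hdr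
    have hμU : μ ≤ U.card := by
      obtain ⟨S, hS⟩ := Finset.card_pos.1 hpos
      exact (hμS S hS).trans (hUS S hS ▸ Finset.card_filter_le _ _)
    obtain ⟨X, hXU, hXc, hX⟩ := exists_le_expected (fun h S => Covers h S)
      (fun S : Finset (Fin n) => S.card * 2 ^ (r - S.card)) 1 U (uncov d R') (by omega) hUS
    have hdisj : Disjoint R' X := by
      rw [Finset.disjoint_left]
      intro h h1 h2
      exact (Finset.mem_sdiff.1 (Finset.mem_of_mem_erase (hXU h2))).2 h1
    have hUpos : (0 : ℝ) < U.card := by exact_mod_cast (by omega : 0 < U.card)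
    refine ⟨R' ∪ X, Finset.union_subset hR' (hXU.trans hUsub), ?_,
      hRR'.trans Finset.subset_union_left, ?_, Or.inr ⟨?_, ?_⟩⟩
    · intro h
      rcases Finset.mem_union.1 h with h | h
      · exact hR'0 h
      · exact Finset.notMem_erase _ _ (hXU h)
    · rw [Finset.card_union_of_disjoint hdisj, hXc]
      omega
    · rw [Finset.card_union_of_disjoint hdisj, hXc]
      omega
    · rw [hP, Int.le_floor]
      rw [← uncov_union] at hX
      have hUr : (2 : ℝ) ^ r - ((R.card : ℝ) + j + 1) = U.card := by
        rw [hUc, Nat.cast_sub (by omega), Nat.cast_sub (by omega), hcj]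
        push_cast
        ring
      rw [hUr]
      have hfac : 0 ≤ 1 - (μ : ℝ) / U.card := by
        rw [sub_nonneg, div_le_one hUpos]
        exact_mod_cast hμU
      calc _ ≤ ∑ S ∈ uncov d R', ∏ l ∈ range 1,
              (1 - ((S.card * 2 ^ (r - S.card) : ℕ) : ℝ) / ((U.card : ℝ) - l)) := by
            exact_mod_cast hX
        _ ≤ ∑ S ∈ uncov d R', (1 - (μ : ℝ) / U.card) := by
            refine Finset.sum_le_sum fun S hS => ?_
            rw [Finset.prod_range_one, Nat.cast_zero, sub_zero]
            have : (μ : ℝ) ≤ ((S.card * 2 ^ (r - S.card) : ℕ) : ℝ) := by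
              exact_mod_cast hμS S hS
            gcongr
        _ = (1 - (μ : ℝ) / U.card) * ((uncov d R').card : ℝ) := by
            rw [Finset.sum_const, nsmul_eq_mul, mul_comm]
        _ ≤ (1 - (μ : ℝ) / U.card) * (P j : ℝ) := by
            refine mul_le_mul_of_nonneg_left ?_ hfac
            exact_mod_cast hPj

theorem piR_eq {n k r i : ℕ} {j : ℤ} (hkn : k ≤ n) (hr : n - k = r) (hi : i ≤ r) :
    piR (n - k) i j = 1 - ((i * 2 ^ (r - i) : ℕ) : ℝ) / ((2 : ℝ) ^ r - (j : ℝ)) := by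
  have h1 : ((n : ℤ) - k) = (r : ℕ) := by omega
  have h2 : ((r : ℤ) - i) = ((r - i : ℕ) : ℤ) := by omega
  rw [piR, h1, h2, zpow_natCast, zpow_natCast]
  push_cast
  rfl

/-! ### The bound on the stopping redundancy -/

/-- Theorem on stopping redundancy: given an `[n,k,d]` code `C` (with `d ≥ 2`,
`r = n − k`), a `τ×n` matrix `H⁰` of pairwise distinct dual codewords with `u i` stopping sets of
size `i`, and the quantities `D_t`, `P_{t,j}`, `κ_t`, `Δ` as in the theorem, for every
`0 ≤ t < 2^r − τ` there is a parity-check matrix of `C` with at most `τ + (t + κ_t) + Δ` rows and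
no stopping sets of size in `{1,…,d−1}`; in particular
`ρ(C) ≤ τ + min_{0 ≤ t < 2^r − τ} (t + κ_t) + Δ`. -/
theorem stmt15 (n k d τ : ℕ) (C : Submodule (ZMod 2) (Fin n → ZMod 2))
    (hk : Module.finrank (ZMod 2) C = k) (hd2 : 2 ≤ d)
    (hd_le : ∀ c ∈ C, c ≠ 0 → d ≤ wt c) (hd_ex : ∃ c ∈ C, c ≠ 0 ∧ wt c = d)
    (H0 : Matrix (Fin τ) (Fin n) (ZMod 2))
    (hrows : ∀ a : Fin τ, H0 a ∈ dualCode C)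
    (hdist : Function.Injective fun a : Fin τ => H0 a)
    (u : ℕ → ℕ)
    (hu : ∀ i, u i = Nat.card {S : Finset (Fin n) // S.card = i ∧ IsStoppingSet H0 S})
    (D : ℕ → ℝ)
    (hD : ∀ t, D t = ∑ i ∈ Finset.Icc 1 (d - 1), (u i : ℝ) *
      ∏ j ∈ Finset.Icc (τ + 1) (τ + t), piR (n - k) i j)
    (P : ℕ → ℕ → ℤ)
    (hP0 : ∀ t, P t 0 = ⌊D t⌋)
    (hPj : ∀ t j, P t (j + 1) = ⌊piR (n - k) (d - 1) (τ + t + (j + 1)) * (P t j : ℝ)⌋)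
    (κ : ℕ → ℕ) (hκ : ∀ t, IsLeast {j : ℕ | P t j ≤ 0} (κ t))
    (Δ : ℕ) (hΔ : Δ = n - k - max H0.rank (d - 1))
    (t : ℕ) (ht : t < 2 ^ (n - k) - τ) :
    (∃ (m : ℕ) (H : Matrix (Fin m) (Fin n) (ZMod 2)),
        IsParityCheck C H ∧
        (∀ S : Finset (Fin n), 1 ≤ S.card → S.card ≤ d - 1 → ¬ IsStoppingSet H S) ∧
        m ≤ τ + (t + κ t) + Δ) ∧
      stoppingRedundancy n d C ≤ τ + (t + κ t) + Δ := by
  classical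
  have hkn : k ≤ n := by
    rw [← hk]
    simpa using Submodule.finrank_le C
  obtain ⟨r, hr⟩ : ∃ r, n - k = r := ⟨_, rfl⟩
  have hrW : Module.finrank (ZMod 2) (dualSub C) = r := by rw [finrank_dualSub, hk, hr]
  have hdn : d ≤ n := by
    obtain ⟨c, -, -, hc⟩ := hd_ex
    rw [← hc]
    exact (Finset.card_le_univ _).trans (by simp)
  have hdr : d - 1 ≤ r := by
    obtain ⟨S, -, hS⟩ := Finset.exists_subset_card_eq (s := (univ : Finset (Fin n))) (n := d - 1)
      (by simp; omega)
    rw [← hS, ← hrW]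
    exact card_le_finrank_dualSub hd_le (by omega)
  set R₀ : Finset (Fin n → ZMod 2) := univ.image fun a : Fin τ => H0 a with hR₀def
  have hR₀c : R₀.card = τ := by
    rw [hR₀def, Finset.card_image_of_injective _ hdist]
    simp
  have hR₀ : R₀ ⊆ dualFin C := by
    intro h hh
    obtain ⟨a, -, rfl⟩ := Finset.mem_image.1 hh
    rw [mem_dualFin, ← SetLike.mem_coe, coe_dualSub]
    exact hrows a
  rw [hr] at ht
  obtain ⟨R, hR, hR0, hRsub, hRc, hRu⟩ := exists_first_phase hd_le hrW R₀ hR₀ t (by rwa [hR₀c])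
  -- grouping the uncovered sets by size turns the expectation into `D t`
  have hDt : D t = ∑ S ∈ uncov d R₀, ∏ l ∈ range t,
        (1 - ((S.card * 2 ^ (r - S.card) : ℕ) : ℝ) /
          ((2 : ℝ) ^ r - ((R₀.card : ℝ) + 1 + l))) := by
    have hmaps : ∀ S ∈ uncov d R₀, S.card ∈ Finset.Icc 1 (d - 1) := fun S hS => by
      obtain ⟨h1, h2, -⟩ := mem_uncov.1 hS
      rw [Finset.mem_Icc]
      omega
    rw [hD, ← Finset.sum_fiberwise_of_maps_to hmaps]
    refine Finset.sum_congr rfl fun i hi => ?_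
    obtain ⟨hi1, hi2⟩ := Finset.mem_Icc.1 hi
    have hui : u i = ((uncov d R₀).filter fun S => S.card = i).card := by
      rw [hu]
      refine Nat.subtype_card _ fun S => ?_
      simp only [Finset.mem_filter, mem_uncov, IsStoppingSet, hR₀def, Finset.forall_mem_image]
      constructor
      · rintro ⟨⟨-, -, h⟩, rfl⟩
        exact ⟨rfl, fun a => h (Finset.mem_univ a)⟩
      · rintro ⟨rfl, h⟩
        exact ⟨⟨hi1, by omega, fun a _ => h a⟩, rfl⟩
    rw [hui, ← nsmul_eq_mul, ← Finset.sum_const]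
    refine Finset.sum_congr rfl fun S hS => ?_
    rw [(Finset.mem_filter.1 hS).2]
    have hIcc : Finset.Icc (τ + 1) (τ + t) = (range t).image fun l => τ + 1 + l := by
      ext x
      simp only [Finset.mem_Icc, Finset.mem_image, Finset.mem_range]
      constructor
      · rintro ⟨h1, h2⟩
        exact ⟨x - (τ + 1), by omega, by omega⟩
      · rintro ⟨l, h1, rfl⟩
        omega
    rw [hIcc, Finset.prod_image (fun a _ b _ h => by simpa using h)]
    refine Finset.prod_congr rfl fun l _ => ?_
    rw [piR_eq hkn hr (by omega), hR₀c]
    push_cast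
    rfl
  have hP0' : (uncov d R).card = 0 ∨ ((uncov d R).card : ℤ) ≤ P t 0 := by
    refine hRu.imp id fun h => ?_
    rw [hP0, Int.le_floor, hDt]
    exact_mod_cast h
  obtain ⟨R', hR', -, hRR', hR'c, hR'u⟩ := exists_second_phase hd_le hrW hdr hd2 R hR hR0 (P t) hP0'
    (fun j => by
      have hcast : ((d : ℤ) - 1) = ((d - 1 : ℕ) : ℤ) := by omega
      rw [hPj, hcast, piR_eq hkn hr hdr, hRc, hR₀c]
      push_cast
      ring_nf) (κ t)
  have hzero : (uncov d R').card = 0 := by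
    rcases hR'u with h | ⟨-, h⟩
    · exact h
    · have : P t (κ t) ≤ 0 := (hκ t).1
      omega
  have hcov : ∀ S : Finset (Fin n), 1 ≤ S.card → S.card ≤ d - 1 → ∃ h ∈ R', Covers h S := by
    intro S h1 h2
    by_contra hno
    push Not at hno
    have : S ∈ uncov d R' := mem_uncov.2 ⟨h1, by omega, hno⟩
    rw [Finset.card_eq_zero.1 hzero] at this
    simp at this
  have hrank1 := le_finrank_span_of_covers hdn (by omega) R' hcov
  have hrank2 : H0.rank ≤ Module.finrank (ZMod 2)
      (Submodule.span (ZMod 2) (R' : Set (Fin n → ZMod 2))) := by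
    rw [Matrix.rank_eq_finrank_span_row]
    refine Submodule.finrank_mono (Submodule.span_le.2 ?_)
    rintro _ ⟨a, rfl⟩
    by_cases ha : H0 a = 0
    · change H0 a ∈ _
      rw [ha]
      exact Submodule.zero_mem _
    · refine Submodule.subset_span (hRR' (hRsub ?_))
      exact Finset.mem_erase.2 ⟨ha, Finset.mem_image_of_mem _ (Finset.mem_univ a)⟩
  obtain ⟨F, hRF, hFspan, hFc⟩ := exists_span_extension (dualSub C) R'
    (fun h hh => mem_dualFin.1 (hR' hh))
  have hFle : F.card ≤ τ + (t + κ t) + Δ := by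
    rw [hrW] at hFc
    rw [hr] at hΔ
    have := max_le hrank2 hrank1
    omega
  let H : Matrix (Fin F.card) (Fin n) (ZMod 2) := fun a => (F.equivFin.symm a : Fin n → ZMod 2)
  have hrange : (Set.range fun a => H a) = (F : Set (Fin n → ZMod 2)) := by
    ext h
    constructor
    · rintro ⟨a, rfl⟩
      exact (F.equivFin.symm a).2
    · intro hh
      exact ⟨F.equivFin ⟨h, hh⟩, by simp [H]⟩
  have hpc : IsParityCheck C H := by
    rw [IsParityCheck, hrange, hFspan, coe_dualSub]
  have hcoverAll : ∀ S : Finset (Fin n), 1 ≤ S.card → S.card ≤ d - 1 → ¬ IsStoppingSet H S := by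
    intro S h1 h2 hs
    obtain ⟨h, hh, hc⟩ := hcov S h1 h2
    have hmem : h ∈ (Set.range fun a => H a) := by
      rw [hrange]
      exact hRF hh
    obtain ⟨a, ha⟩ := hmem
    exact hs a (by rw [show H a = h from ha]; exact hc)
  refine ⟨⟨F.card, H, hpc, hcoverAll, hFle⟩, le_trans (Nat.sInf_le ?_) hFle⟩
  exact ⟨H, hpc, hcoverAll⟩
end
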